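/- Let d ≥ 1 and let (A_n)_{n≥1} be rotor-router aggregation in ℤ^d built from any configuration of rotor stacks with discrepancy at most 1 (in particular, from any initial configuration of cyclically repeating rotors). Then 𝓛(n^{−1/d} A_n^□ Δ B) → 0 as n → ∞, where B ⊆ ℝ^d is the closed Euclidean ball of unit volume centered at the origin. -/

import Mathlib

open scoped BigOperators Pointwise symmDiff
open MeasureTheory Filter

noncomputable section
open scoped Classical
namespace RotorRouterPaper

/-- Sites of the lattice `ℤ^d`. -/
abbrev Site (d : ℕ) := Fin d → ℤ

/-- The `i`-th standard basis vector of `ℤ^d`. -/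
def unitVec (d : ℕ) (i : Fin d) : Site d := fun j => if j = i then 1 else 0

/-- Squared Euclidean norm of a lattice point. -/
def nsq {d : ℕ} (x : Site d) : ℝ := ∑ i, ((x i : ℝ)) ^ 2

/-- Euclidean norm of a lattice point. -/
def enorm {d : ℕ} (x : Site d) : ℝ := Real.sqrt (nsq x)

/-- Adjacency `x ∼ y`: Euclidean distance one. -/
def Adj {d : ℕ} (x y : Site d) : Prop := nsq (x - y) = 1

/-- `ω_d`, the Lebesgue volume of the unit ball in `ℝ^d`. -/
def ballVol (d : ℕ) : ℝ := (volume (Metric.ball (0 : EuclideanSpace ℝ (Fin d)) 1)).toReal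

/-- The lattice ball `B_n = {y ∈ ℤ^d : ω_d ‖y‖^d < n}`. -/
def lball (d n : ℕ) : Set (Site d) := {y | ballVol d * enorm y ^ d < (n : ℝ)}

/-- Characterization of the expected exit time function of a (finite) region `A ⊆ ℤ^d`:
it vanishes off `A` and its discrete Laplacian is `-1` on `A`. -/
def IsExitFun (d : ℕ) (A : Set (Site d)) (e : Site d → ℝ) : Prop :=
  (∀ x, x ∉ A → e x = 0) ∧
  ∀ x ∈ A, (1 / (2 * (d : ℝ))) * (∑ i, (e (x + unitVec d i) + e (x - unitVec d i))) - e x = -1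

/-- The expected exit time function `x ↦ e_x(A)` (the unique function satisfying
`IsExitFun` when `A` is finite). -/
def exitFun (d : ℕ) (A : Set (Site d)) : Site d → ℝ :=
  if h : ∃ e, IsExitFun d A e then h.choose else 0

/-- `ē(A) = sup_x e_x(A)`. -/
def ebar (d : ℕ) (A : Set (Site d)) : ℝ := sSup (Set.range (exitFun d A))

/-- `φ(n) = sup {ē(A) - e_o(B_n) : A ⊆ ℤ^d, |A| = n}`. -/
def phi (d n : ℕ) : ℝ :=
  sSup {t | ∃ A : Set (Site d), A.Finite ∧ A.ncard = n ∧ t = ebar d A - exitFun d (lball d n) 0}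

/-- `Φ(n) = ∑_{j=1}^n φ(j)`. -/
def PhiSum (d n : ℕ) : ℝ := ∑ j ∈ Finset.Icc 1 n, phi d j

/-- `ψ(A) = ∑_{x ∈ A} ‖x‖²`. -/
def psi {d : ℕ} (A : Set (Site d)) : ℝ := ∑ᶠ x ∈ A, nsq x

/-- A cardinal direction in `ℤ^d`: one of `±e_1, …, ±e_d`. -/
abbrev Dir (d : ℕ) := Fin d × Bool

/-- The lattice step vector of a cardinal direction. -/
def dirVec (d : ℕ) (ε : Dir d) : Site d := if ε.2 then unitVec d ε.1 else -unitVec d ε.1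

/-- A configuration of rotor stacks `r` (with `r x i` the direction used for the
`(i+1)`-st visit to `x`) has discrepancy at most `D` if for every site, direction and `m ≥ 1`,
among the first `m` rotors of the stack each direction occurs `m/(2d)` times up to error `D`. -/
def HasDiscrepancy (d : ℕ) (D : ℝ) (r : Site d → ℕ → Dir d) : Prop :=
  ∀ (x : Site d) (ε : Dir d) (m : ℕ), 1 ≤ m →
    |(({i | i < m ∧ r x i = ε} : Set ℕ).ncard : ℝ) - (m : ℝ) / (2 * (d : ℝ))| ≤ D

/-- One step of rotor-router walk on a state (current position, visit counts so far):
the particle at `p` being visited for the `(c p + 1)`-st time moves in direction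
`r p (c p)` and the visit count at `p` increases by one. -/
def rstep {d : ℕ} (r : Site d → ℕ → Dir d) (s : Site d × (Site d → ℕ)) :
    Site d × (Site d → ℕ) :=
  (s.1 + dirVec d (r s.1 (s.2 s.1)), Function.update s.2 s.1 (s.2 s.1 + 1))

/-- The state after `t` steps of rotor-router walk started at the origin with visit counts `c`. -/
def walkState {d : ℕ} (r : Site d → ℕ → Dir d) (c : Site d → ℕ) (t : ℕ) :
    Site d × (Site d → ℕ) :=
  (rstep r)^[t] (0, c)

/-- The number of steps until the rotor-router walk started at the origin
(with carried-over visit counts `c`) first leaves the region `A`. -/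
def exitSteps {d : ℕ} (r : Site d → ℕ → Dir d) (A : Set (Site d)) (c : Site d → ℕ) : ℕ :=
  sInf {t | (walkState r c t).1 ∉ A}

/-- The state of rotor-router aggregation after `n` particles have walked and settled:
`(aggState r n).1` is the occupied region `A_{n+1}`, `(aggState r n).2.1` the accumulated
visit counts, and `(aggState r n).2.2` the total number `T_n` of steps taken so far. -/
def aggState {d : ℕ} (r : Site d → ℕ → Dir d) : ℕ → Set (Site d) × (Site d → ℕ) × ℕ
  | 0 => ({0}, fun _ => 0, 0)
  | n + 1 =>
      let s := aggState r n
      let τ := exitSteps r s.1 s.2.1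
      (insert (walkState r s.2.1 τ).1 s.1, (walkState r s.2.1 τ).2, s.2.2 + τ)

/-- The region `A_n` of rotor-router aggregation (for `n ≥ 1`). -/
def aggRegion {d : ℕ} (r : Site d → ℕ → Dir d) (n : ℕ) : Set (Site d) :=
  (aggState r (n - 1)).1

/-- `T_n`, the total number of steps taken by the first `n` particles. -/
def totalSteps {d : ℕ} (r : Site d → ℕ → Dir d) (n : ℕ) : ℕ := (aggState r n).2.2

/-- `A^□ = A + [-1/2,1/2]^d ⊆ ℝ^d`. -/
def box (d : ℕ) (A : Set (Site d)) : Set (EuclideanSpace ℝ (Fin d)) :=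
  {z | ∃ x ∈ A, ∀ i, |z i - (x i : ℝ)| ≤ 1 / 2}

/-- The closed Euclidean ball of unit volume centered at the origin of `ℝ^d`. -/
def unitVolBall (d : ℕ) : Set (EuclideanSpace ℝ (Fin d)) :=
  Metric.closedBall 0 (ballVol d ^ (-(1 : ℝ) / (d : ℝ)))

/-- `A ⊆ ℤ^d` is orthoconvex if every line parallel to a coordinate axis meets `A`
in an interval. -/
def Orthoconvex (d : ℕ) (A : Set (Site d)) : Prop :=
  ∀ x ∈ A, ∀ i : Fin d, ∀ k : ℤ, 0 < k → x + k • unitVec d i ∈ A →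
    ∀ j : ℤ, 0 < j → j < k → x + j • unitVec d i ∈ A

/-- The nonnegative orthant `Q ⊆ ℤ^d`. -/
def orthant (d : ℕ) : Set (Site d) := {x | ∀ i, 0 ≤ x i}

/-- The cube `C(o,r) = {x : ‖x‖_∞ ≤ r}`. -/
def cubeSet (d : ℕ) (r : ℕ) : Set (Site d) := {x | ∀ i, |x i| ≤ (r : ℤ)}

/-- The boundary `∂C(o,r) = {x : ‖x‖_∞ = r + 1 and x ∼ y for some y ∈ C(o,r)}`. -/
def cubeBdry (d : ℕ) (r : ℕ) : Set (Site d) :=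
  {x | (∀ i, |x i| ≤ (r : ℤ) + 1) ∧ (∃ i, |x i| = (r : ℤ) + 1) ∧ ∃ y ∈ cubeSet d r, Adj x y}

/-- Characterization of `h_r(x) = P_x(T_Q > T_{∂C(o,r)})`: it vanishes on
`Q ∩ (C(o,r) ∪ ∂C(o,r))`, equals `1` on `∂C(o,r) ∖ Q`, is discrete harmonic on
`C(o,r) ∖ Q`, and (as a normalization) vanishes off `C(o,r) ∪ ∂C(o,r)`. -/
def IsOrthHarm (d : ℕ) (r : ℕ) (h : Site d → ℝ) : Prop :=
  (∀ x, x ∉ cubeSet d r ∪ cubeBdry d r → h x = 0) ∧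
  (∀ x ∈ orthant d ∩ (cubeSet d r ∪ cubeBdry d r), h x = 0) ∧
  (∀ x ∈ cubeBdry d r \ orthant d, h x = 1) ∧
  (∀ x ∈ cubeSet d r \ orthant d,
    h x = (1 / (2 * (d : ℝ))) * ∑ i, (h (x + unitVec d i) + h (x - unitVec d i)))

/-- The function `h_r` of the previous characterization. -/
def orthHarm (d : ℕ) (r : ℕ) : Site d → ℝ :=
  if h : ∃ f, IsOrthHarm d r f then h.choose else 0

/-- `p(k,r) = sup {h_r(x) : ‖x‖_∞ ≤ k}`. -/
def pkr (d k r : ℕ) : ℝ :=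
  sSup {t | ∃ x : Site d, (∀ i, |x i| ≤ (k : ℤ)) ∧ t = orthHarm d r x}

/-- The exponent `γ_d` of Theorem 3.1. -/
def gam (d : ℕ) : ℝ :=
  if d = 1 then 1 else if d = 2 then 1 / 3
  else (2 : ℝ) ^ (-(d : ℝ)) / (2 * (d : ℝ) ^ 2 * Real.log 3)


/-- Unnormalised discrete Laplacian. -/
def Lp {d : ℕ} (f : Site d → ℝ) (x : Site d) : ℝ := ∑ ε : Dir d, (f (x + dirVec d ε) - f x)

/-- opposite direction -/
def negDir {d : ℕ} (ε : Dir d) : Dir d := (ε.1, !ε.2)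

lemma negDir_negDir {d : ℕ} (ε : Dir d) : negDir (negDir ε) = ε := by
  simp [negDir]

lemma dirVec_negDir {d : ℕ} (ε : Dir d) : dirVec d (negDir ε) = - dirVec d ε := by
  rcases ε with ⟨i, b⟩
  cases b <;> simp [dirVec, negDir]

def negDirEquiv (d : ℕ) : Dir d ≃ Dir d :=
  ⟨negDir, negDir, negDir_negDir, negDir_negDir⟩

lemma sum_dir {d : ℕ} (g : Dir d → ℝ) : ∑ ε, g ε = ∑ i, (g (i, true) + g (i, false)) := by
  rw [Fintype.sum_prod_type]
  simp

lemma sum_negDir {d : ℕ} (g : Dir d → ℝ) : ∑ ε, g (negDir ε) = ∑ ε, g ε :=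
  Equiv.sum_comp (negDirEquiv d) g

/-- Minimum principle. -/
lemma min_principle {d : ℕ} (hd : 1 ≤ d) (S : Finset (Site d)) (g : Site d → ℝ)
    (hL : ∀ x ∈ S, g x < 0 → Lp g x ≤ 0)
    (hb : ∀ x ∈ S, g x < 0 → ∀ ε, x + dirVec d ε ∉ S → 0 ≤ g (x + dirVec d ε)) :
    ∀ x ∈ S, 0 ≤ g x := by
  by_contra hcon
  push Not at hcon
  obtain ⟨x₀, hx₀, hneg⟩ := hcon
  obtain ⟨x₁, hx₁, hmin⟩ := S.exists_min_image g ⟨x₀, hx₀⟩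
  set m := g x₁ with hm
  have hmneg : m < 0 := lt_of_le_of_lt (hmin x₀ hx₀) hneg
  let i : Fin d := ⟨0, hd⟩
  let T := S.filter (fun x => g x = m)
  obtain ⟨x₂, hx₂, hmax⟩ := T.exists_max_image (fun x => x i) ⟨x₁, by simp [T, hx₁, hm]⟩
  have hx₂S : x₂ ∈ S := (Finset.mem_filter.1 hx₂).1
  have hx₂m : g x₂ = m := (Finset.mem_filter.1 hx₂).2
  have hx₂neg : g x₂ < 0 := by rw [hx₂m]; exact hmneg
  have hnn : ∀ ε ∈ (Finset.univ : Finset (Dir d)), 0 ≤ g (x₂ + dirVec d ε) - g x₂ := by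
    intro ε _
    by_cases h : x₂ + dirVec d ε ∈ S
    · have := hmin _ h
      rw [hx₂m]; linarith
    · have := hb x₂ hx₂S hx₂neg ε h
      linarith
  have h0 : Lp g x₂ = 0 := le_antisymm (hL x₂ hx₂S hx₂neg) (Finset.sum_nonneg hnn)
  have h1 := (Finset.sum_eq_zero_iff_of_nonneg hnn).1 h0 (i, true) (Finset.mem_univ _)
  have h2 : g (x₂ + dirVec d (i, true)) = m := by rw [← hx₂m]; linarith
  have h3 : x₂ + dirVec d (i, true) ∈ S := by
    by_contra h
    have := hb x₂ hx₂S hx₂neg _ h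
    linarith
  have h4 := hmax (x₂ + dirVec d (i, true)) (Finset.mem_filter.2 ⟨h3, h2⟩)
  simp [dirVec, unitVec] at h4

/-- Existence for the Dirichlet problem. -/
lemma exists_dirichlet {d : ℕ} (hd : 1 ≤ d) (D : Finset (Site d)) (ρ : Site d → ℝ) :
    ∃ f : Site d → ℝ, (∀ x, x ∉ D → f x = 0) ∧ ∀ x ∈ D, Lp f x = - ρ x := by
  let ext : (D → ℝ) → Site d → ℝ := fun v x => if h : x ∈ D then v ⟨x, h⟩ else 0
  have ext_in : ∀ v (x : D), ext v x = v x := by intro v x; simp [ext]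
  have ext_out : ∀ v (x : Site d), x ∉ D → ext v x = 0 := by intro v x hx; simp [ext, hx]
  have ext_add : ∀ v w, ext (v + w) = ext v + ext w := by
    intro v w; funext x; by_cases h : x ∈ D <;> simp [ext, h]
  have ext_smul : ∀ (c : ℝ) v, ext (c • v) = c • ext v := by
    intro v w; funext x; by_cases h : x ∈ D <;> simp [ext, h]
  let T : (D → ℝ) →ₗ[ℝ] (D → ℝ) :=
    { toFun := fun v x => Lp (ext v) x
      map_add' := by
        intro v w; funext x
        simp only [ext_add, Lp, Pi.add_apply, ← Finset.sum_add_distrib]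
        exact Finset.sum_congr rfl (fun _ _ => by ring)
      map_smul' := by
        intro c v; funext x
        simp only [ext_smul, Lp, Pi.smul_apply, smul_eq_mul, RingHom.id_apply, Finset.mul_sum]
        exact Finset.sum_congr rfl (fun _ _ => by ring) }
  have key : ∀ v, T v = 0 → ∀ x : D, 0 ≤ v x := by
    intro v hv x
    have := min_principle hd D (ext v) (fun y hy _ => by
      have := congrFun hv ⟨y, hy⟩
      exact le_of_eq this) (fun y hy _ ε h => by rw [ext_out _ _ h]) x x.2
    rwa [ext_in] at this
  have hinj : Function.Injective T := by
    rw [injective_iff_map_eq_zero]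
    intro v hv
    funext x
    apply le_antisymm
    · have h1 : T (-v) = 0 := by rw [map_neg, hv, neg_zero]
      have := key (-v) h1 x
      simpa using this
    · exact key v hv x
  obtain ⟨v, hv⟩ := (LinearMap.injective_iff_surjective.1 hinj) (fun x => - ρ x)
  refine ⟨ext v, ext_out v, fun x hx => ?_⟩
  exact congrFun hv ⟨x, hx⟩

lemma tsum_shift {d : ℕ} (g : Site d → ℝ) (a : Site d) : ∑' x, g (x + a) = ∑' x, g x :=
  (Equiv.addRight a).tsum_eq g

lemma summable_fin {d : ℕ} (D : Finset (Site d)) (g : Site d → ℝ) (h : ∀ x, x ∉ D → g x = 0) :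
    Summable g := summable_of_ne_finset_zero (s := D) (fun x hx => h x hx)

lemma summable_shift {d : ℕ} (D : Finset (Site d)) (g : Site d → ℝ) (h : ∀ x, x ∉ D → g x = 0)
    (a : Site d) : Summable (fun x => g (x + a)) :=
  ((Equiv.addRight a).summable_iff (f := g)).2 (summable_fin D g h)

lemma tsum_dir {d : ℕ} (F : Dir d → Site d → ℝ) (h : ∀ ε, Summable (F ε)) :
    ∑' x, ∑ ε, F ε x = ∑ ε, ∑' x, F ε x :=
  Summable.tsum_finsetSum (fun ε _ => h ε)

lemma summable_mul_shift {d : ℕ} (D : Finset (Site d)) (f w : Site d → ℝ)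
    (hf : ∀ x, x ∉ D → f x = 0) (a : Site d) : Summable (fun x => w x * f (x + a)) := by
  have : (fun x => w x * f (x + a)) = fun x => (fun y => w (y - a) * f y) (x + a) := by
    funext x; simp
  rw [this]
  exact summable_shift D (fun y => w (y - a) * f y) (fun x hx => by simp [hf x hx]) a

/-- Summation by parts. -/
lemma sum_by_parts {d : ℕ} (D : Finset (Site d)) (f w : Site d → ℝ)
    (hf : ∀ x, x ∉ D → f x = 0) :
    Summable (fun x => w x * Lp f x) ∧
    ∑' x, f x * Lp w x = ∑' x, w x * Lp f x := by
  have s1 : ∀ ε : Dir d, Summable (fun x => f x * (w (x + dirVec d ε) - w x)) :=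
    fun ε => summable_fin D _ (fun x hx => by simp [hf x hx])
  have s1a : ∀ ε : Dir d, Summable (fun x => f x * w (x + dirVec d ε)) :=
    fun ε => summable_fin D _ (fun x hx => by simp [hf x hx])
  have s1b : Summable (fun x => f x * w x) :=
    summable_fin D _ (fun x hx => by simp [hf x hx])
  have s2a : ∀ ε : Dir d, Summable (fun x => w x * f (x + dirVec d ε)) :=
    fun ε => summable_mul_shift D f w hf _
  have s2 : ∀ ε : Dir d, Summable (fun x => w x * (f (x + dirVec d ε) - f x)) := by
    intro ε
    have := (s2a ε).sub s1b
    refine this.congr (fun x => by ring)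
  constructor
  · have := summable_sum (s := Finset.univ) (fun ε (_ : ε ∈ (Finset.univ : Finset (Dir d))) => s2 ε)
    refine this.congr (fun x => ?_)
    simp only [Lp, Finset.mul_sum]
  have e1 : ∑' x, f x * Lp w x = ∑ ε : Dir d, ∑' x, f x * (w (x + dirVec d ε) - w x) := by
    rw [← tsum_dir _ s1]
    simp only [Lp, Finset.mul_sum]
  have e2 : ∑' x, w x * Lp f x = ∑ ε : Dir d, ∑' x, w x * (f (x + dirVec d ε) - f x) := by
    rw [← tsum_dir _ s2]
    simp only [Lp, Finset.mul_sum]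
  rw [e1, e2, ← sum_negDir (fun ε => ∑' x, w x * (f (x + dirVec d ε) - f x))]
  refine Finset.sum_congr rfl (fun ε _ => ?_)
  have e3 : ∑' x, f x * (w (x + dirVec d ε) - w x)
      = ∑' x, f x * w (x + dirVec d ε) - ∑' x, f x * w x := by
    rw [← (s1a ε).tsum_sub s1b]
    exact tsum_congr (fun x => by ring)
  have e4 : ∑' x, w x * (f (x + dirVec d (negDir ε)) - f x)
      = ∑' x, w x * f (x + dirVec d (negDir ε)) - ∑' x, f x * w x := by
    rw [← (s2a (negDir ε)).tsum_sub s1b]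
    exact tsum_congr (fun x => by ring)
  rw [e3, e4]
  congr 1
  rw [← tsum_shift (fun x => w x * f (x + dirVec d (negDir ε))) (dirVec d ε)]
  refine tsum_congr (fun x => ?_)
  simp [dirVec_negDir, mul_comm]

/-- Energy identity. -/
lemma energy {d : ℕ} (D : Finset (Site d)) (f : Site d → ℝ)
    (hf : ∀ x, x ∉ D → f x = 0) :
    ∑ ε : Dir d, ∑' x, (f (x + dirVec d ε) - f x) ^ 2 = - 2 * ∑' x, f x * Lp f x := by
  have s1b : Summable (fun x => f x * f x) :=
    summable_fin D _ (fun x hx => by simp [hf x hx])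
  have s1a : ∀ ε : Dir d, Summable (fun x => f x * f (x + dirVec d ε)) :=
    fun ε => summable_fin D _ (fun x hx => by simp [hf x hx])
  have s1c : ∀ ε : Dir d, Summable (fun x => f (x + dirVec d ε) * f (x + dirVec d ε)) :=
    fun ε => summable_shift D (fun x => f x * f x) (fun x hx => by simp [hf x hx]) _
  have s1 : ∀ ε : Dir d, Summable (fun x => f x * (f (x + dirVec d ε) - f x)) :=
    fun ε => summable_fin D _ (fun x hx => by simp [hf x hx])
  have e1 : ∑' x, f x * Lp f x = ∑ ε : Dir d, ∑' x, f x * (f (x + dirVec d ε) - f x) := by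
    rw [← tsum_dir _ s1]
    simp only [Lp, Finset.mul_sum]
  rw [e1, Finset.mul_sum]
  refine Finset.sum_congr rfl (fun ε _ => ?_)
  have e2 : ∑' x, (f (x + dirVec d ε) - f x) ^ 2 = ∑' x, f (x + dirVec d ε) * f (x + dirVec d ε)
      - ∑' x, f x * f x - 2 * ∑' x, f x * (f (x + dirVec d ε) - f x) := by
    rw [← tsum_mul_left, ← (s1c ε).tsum_sub s1b, ← ((s1c ε).sub s1b).tsum_sub ((s1 ε).mul_left 2)]
    exact tsum_congr (fun x => by ring)
  rw [e2, tsum_shift (fun x => f x * f x)]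
  ring

/-- `L¹` bound on the gradient via Cauchy-Schwarz. -/
lemma grad_l1 {d : ℕ} (D : Finset (Site d)) (f : Site d → ℝ)
    (hf : ∀ x, x ∉ D → f x = 0) (A : Finset (Site d)) :
    (∑ x ∈ A, ∑ ε : Dir d, |f (x + dirVec d ε) - f x|) ^ 2 ≤
      (4 * d * (D.card : ℝ)) * (- 2 * ∑' x, f x * Lp f x) := by
  let P : Finset (Site d × Dir d) :=
    (A ×ˢ Finset.univ).filter (fun p => p.1 ∈ D ∨ p.1 + dirVec d p.2 ∈ D)
  have hP : (P.card : ℝ) ≤ 4 * d * (D.card : ℝ) := by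
    have h1 : P ⊆ (D ×ˢ (Finset.univ : Finset (Dir d))) ∪
        (D ×ˢ (Finset.univ : Finset (Dir d))).image (fun p => (p.1 - dirVec d p.2, p.2)) := by
      intro p hp
      rcases (Finset.mem_filter.1 hp).2 with h | h
      · exact Finset.mem_union_left _ (Finset.mem_product.2 ⟨h, Finset.mem_univ _⟩)
      · refine Finset.mem_union_right _ (Finset.mem_image.2 ⟨(p.1 + dirVec d p.2, p.2), ?_, ?_⟩)
        · exact Finset.mem_product.2 ⟨h, Finset.mem_univ _⟩
        · simp
    have h2 := (Finset.card_le_card h1).trans (Finset.card_union_le _ _)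
    have h3 := Finset.card_image_le (s := D ×ˢ (Finset.univ : Finset (Dir d)))
      (f := fun p => (p.1 - dirVec d p.2, p.2))
    have h4 : (D ×ˢ (Finset.univ : Finset (Dir d))).card = D.card * (d * 2) := by
      simp
    have h5 : P.card ≤ D.card * (d * 2) + D.card * (d * 2) := by omega
    have : (P.card : ℝ) ≤ D.card * (d * 2) + D.card * (d * 2) := by exact_mod_cast h5
    linarith
  have e1 : ∑ x ∈ A, ∑ ε : Dir d, |f (x + dirVec d ε) - f x| =
      ∑ p ∈ P, |f (p.1 + dirVec d p.2) - f p.1| := by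
    rw [← Finset.sum_product' A Finset.univ (fun x ε => |f (x + dirVec d ε) - f x|)]
    symm
    apply Finset.sum_filter_of_ne
    intro p _ hp
    by_contra hcon
    push Not at hcon
    apply hp
    simp [hf _ hcon.1, hf _ hcon.2]
  have e2 : ∑ p ∈ P, (f (p.1 + dirVec d p.2) - f p.1) ^ 2 ≤ - 2 * ∑' x, f x * Lp f x := by
    have h1 : ∑ p ∈ P, (f (p.1 + dirVec d p.2) - f p.1) ^ 2 ≤
        ∑ p ∈ A ×ˢ (Finset.univ : Finset (Dir d)), (f (p.1 + dirVec d p.2) - f p.1) ^ 2 :=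
      Finset.sum_le_sum_of_subset_of_nonneg (Finset.filter_subset _ _) (fun _ _ _ => sq_nonneg _)
    refine h1.trans ?_
    rw [← energy D f hf, Finset.sum_product' A Finset.univ (fun x ε => (f (x + dirVec d ε) - f x)^2),
      Finset.sum_comm]
    refine Finset.sum_le_sum (fun ε _ => ?_)
    refine Summable.sum_le_tsum A (fun _ _ => sq_nonneg _) ?_
    have s1 : Summable (fun x => f x * f x) :=
      summable_fin D _ (fun x hx => by simp [hf x hx])
    have s2 : Summable (fun x => f x * f (x + dirVec d ε)) :=
      summable_fin D _ (fun x hx => by simp [hf x hx])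
    have s3 : Summable (fun x => f (x + dirVec d ε) * f (x + dirVec d ε)) :=
      summable_shift D (fun x => f x * f x) (fun x hx => by simp [hf x hx]) _
    refine ((s3.add s1).sub (s2.mul_left 2)).congr (fun x => by ring)
  rw [e1]
  calc (∑ p ∈ P, |f (p.1 + dirVec d p.2) - f p.1|) ^ 2
      ≤ P.card * ∑ p ∈ P, |f (p.1 + dirVec d p.2) - f p.1| ^ 2 := sq_sum_le_card_mul_sum_sq
    _ = P.card * ∑ p ∈ P, (f (p.1 + dirVec d p.2) - f p.1) ^ 2 := by simp only [sq_abs]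
    _ ≤ _ := by
      apply mul_le_mul hP e2 (Finset.sum_nonneg (fun _ _ => sq_nonneg _)) (by positivity)

/-- Sum of the increments of `f` along the first `m` rotors at `x`. -/
def Wf {d : ℕ} (r : Site d → ℕ → Dir d) (f : Site d → ℝ) (x : Site d) (m : ℕ) : ℝ :=
  ∑ i ∈ Finset.range m, (f (x + dirVec d (r x i)) - f x)

lemma Wf_bound {d : ℕ} (r : Site d → ℕ → Dir d) (hr : HasDiscrepancy d 1 r)
    (f : Site d → ℝ) (x : Site d) (m : ℕ) :
    |Wf r f x m - (m : ℝ) / (2 * d) * Lp f x| ≤ ∑ ε : Dir d, |f (x + dirVec d ε) - f x| := by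
  rcases Nat.eq_zero_or_pos m with rfl | hm
  · simp only [Wf, Finset.range_zero, Finset.sum_empty, Nat.cast_zero, zero_div, zero_mul, sub_self,
      abs_zero]
    exact Finset.sum_nonneg (fun _ _ => abs_nonneg _)
  have e1 : Wf r f x m = ∑ ε : Dir d, (({i | i < m ∧ r x i = ε} : Set ℕ).ncard : ℝ) *
      (f (x + dirVec d ε) - f x) := by
    have h1 : ∀ ε : Dir d, (({i | i < m ∧ r x i = ε} : Set ℕ).ncard : ℝ) =
        ∑ i ∈ Finset.range m, if r x i = ε then (1 : ℝ) else 0 := by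
      intro ε
      have : ({i | i < m ∧ r x i = ε} : Set ℕ) = ((Finset.range m).filter (fun i => r x i = ε) : Finset ℕ) := by
        ext i; simp
      rw [this, Set.ncard_coe_finset, Finset.sum_boole]
    simp only [h1, Finset.sum_mul]
    rw [Finset.sum_comm]
    refine Finset.sum_congr rfl (fun i _ => ?_)
    simp only [ite_mul, one_mul, zero_mul, Finset.sum_ite_eq, Finset.mem_univ, if_true]
  have e2 : Wf r f x m - (m : ℝ) / (2 * d) * Lp f x = ∑ ε : Dir d,
      ((({i | i < m ∧ r x i = ε} : Set ℕ).ncard : ℝ) - (m : ℝ) / (2 * d)) *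
      (f (x + dirVec d ε) - f x) := by
    rw [e1, Lp, Finset.mul_sum, ← Finset.sum_sub_distrib]
    exact Finset.sum_congr rfl (fun _ _ => by ring)
  rw [e2]
  refine (Finset.abs_sum_le_sum_abs _ _).trans (Finset.sum_le_sum (fun ε _ => ?_))
  rw [abs_mul]
  calc _ ≤ 1 * |f (x + dirVec d ε) - f x| :=
        mul_le_mul_of_nonneg_right (hr x ε m hm) (abs_nonneg _)
    _ = _ := one_mul _

lemma walkState_succ {d : ℕ} (r : Site d → ℕ → Dir d) (c : Site d → ℕ) (t : ℕ) :
    walkState r c (t + 1) = rstep r (walkState r c t) := by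
  simp [walkState, Function.iterate_succ_apply']

lemma walk_inv {d : ℕ} (r : Site d → ℕ → Dir d) (A : Finset (Site d)) (c : Site d → ℕ)
    (hc : ∀ x, x ∉ A → c x = 0) (f : Site d → ℝ) (t : ℕ)
    (ht : ∀ s < t, (walkState r c s).1 ∈ A) :
    (∀ x, x ∉ A → (walkState r c t).2 x = 0) ∧
    (∑ x ∈ A, (walkState r c t).2 x = ∑ x ∈ A, c x + t) ∧
    ∑ x ∈ A, Wf r f x ((walkState r c t).2 x) =
      ∑ x ∈ A, Wf r f x (c x) + f (walkState r c t).1 - f 0 := by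
  induction t with
  | zero => simp [walkState]; exact hc
  | succ t ih =>
    obtain ⟨h1, h2, h3⟩ := ih (fun s hs => ht s (by omega))
    have hp : (walkState r c t).1 ∈ A := ht t (by omega)
    rw [walkState_succ]
    set s := walkState r c t with hs
    have hne : ∀ x ∈ A.erase s.1, Function.update s.2 s.1 (s.2 s.1 + 1) x = s.2 x := by
      intro x hx
      rw [Function.update_of_ne (Finset.ne_of_mem_erase hx)]
    refine ⟨?_, ?_, ?_⟩
    · intro x hx
      have : x ≠ s.1 := fun h => hx (h ▸ hp)
      simp only [rstep, Function.update_of_ne this]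
      exact h1 x hx
    · have e1 := Finset.add_sum_erase A s.2 hp
      have e2 := Finset.add_sum_erase A (Function.update s.2 s.1 (s.2 s.1 + 1)) hp
      rw [Finset.sum_congr rfl hne, Function.update_self] at e2
      simp only [rstep]
      have e3 : (A.erase s.1).sum s.2 = ∑ x ∈ A.erase s.1, s.2 x := rfl
      have e4 : A.sum s.2 = ∑ x ∈ A, s.2 x := rfl
      rw [← e2]
      omega
    · have e1 := Finset.add_sum_erase A (fun x => Wf r f x (s.2 x)) hp
      have e2 := Finset.add_sum_erase A
        (fun x => Wf r f x (Function.update s.2 s.1 (s.2 s.1 + 1) x)) hp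
      have e3 : ∑ x ∈ A.erase s.1, Wf r f x (Function.update s.2 s.1 (s.2 s.1 + 1) x) =
          ∑ x ∈ A.erase s.1, Wf r f x (s.2 x) :=
        Finset.sum_congr rfl (fun x hx => by rw [hne x hx])
      simp only [Function.update_self] at e2
      rw [e3] at e2
      have e4 : Wf r f s.1 (s.2 s.1 + 1) = Wf r f s.1 (s.2 s.1) +
          (f (s.1 + dirVec d (r s.1 (s.2 s.1))) - f s.1) := by
        simp only [Wf, Finset.sum_range_succ]
      simp only [rstep]
      linarith

lemma nsq_add {d : ℕ} (x y : Site d) :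
    nsq (x + y) = nsq x + 2 * ∑ i, (x i : ℝ) * (y i : ℝ) + nsq y := by
  simp only [nsq, Finset.mul_sum, ← Finset.sum_add_distrib]
  refine Finset.sum_congr rfl (fun i _ => ?_)
  simp only [Pi.add_apply]
  push_cast
  ring

lemma nsq_nonneg {d : ℕ} (x : Site d) : 0 ≤ nsq x :=
  Finset.sum_nonneg (fun _ _ => sq_nonneg _)

lemma nsq_add_true {d : ℕ} (x : Site d) (i : Fin d) :
    nsq (x + dirVec d (i, true)) = nsq x + 2 * (x i : ℝ) + 1 := by
  rw [nsq_add]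
  simp [dirVec, unitVec, nsq]

lemma nsq_add_false {d : ℕ} (x : Site d) (i : Fin d) :
    nsq (x + dirVec d (i, false)) = nsq x - 2 * (x i : ℝ) + 1 := by
  rw [nsq_add]
  simp [dirVec, unitVec, nsq]
  ring

lemma Lp_nsq {d : ℕ} (x : Site d) : Lp nsq x = 2 * d := by
  rw [Lp, sum_dir]
  have : ∀ i : Fin d, nsq (x + dirVec d (i, true)) - nsq x +
      (nsq (x + dirVec d (i, false)) - nsq x) = 2 := by
    intro i; rw [nsq_add_true, nsq_add_false]; ring
  simp only [this]
  simp [mul_comm]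

lemma walk_exits {d : ℕ} (hd : 1 ≤ d) (r : Site d → ℕ → Dir d) (hr : HasDiscrepancy d 1 r)
    (A : Finset (Site d)) (c : Site d → ℕ) (hc : ∀ x, x ∉ A → c x = 0) :
    ∃ t, (walkState r c t).1 ∉ A := by
  by_contra hcon
  push Not at hcon
  have hd0 : (d : ℝ) ≠ 0 := by positivity
  set K : ℝ := ∑ x ∈ A, Wf r nsq x (c x) + ∑ x ∈ A, nsq x +
    ∑ x ∈ A, ∑ ε : Dir d, |nsq (x + dirVec d ε) - nsq x| with hK
  have key : ∀ t : ℕ, (t : ℝ) ≤ K := by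
    intro t
    obtain ⟨h1, h2, h3⟩ := walk_inv r A c hc nsq t (fun s _ => hcon s)
    have h4 : nsq (walkState r c t).1 ≤ ∑ x ∈ A, nsq x :=
      Finset.single_le_sum (f := nsq) (fun x _ => nsq_nonneg x) (hcon t)
    have h5 : ∑ x ∈ A, (((walkState r c t).2 x : ℝ) -
        ∑ ε : Dir d, |nsq (x + dirVec d ε) - nsq x|) ≤
        ∑ x ∈ A, Wf r nsq x ((walkState r c t).2 x) := by
      refine Finset.sum_le_sum (fun x _ => ?_)
      have := (abs_le.1 (Wf_bound r hr nsq x ((walkState r c t).2 x))).1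
      rw [Lp_nsq] at this
      have e : ((walkState r c t).2 x : ℝ) / (2 * d) * (2 * d) = ((walkState r c t).2 x : ℝ) := by
        field_simp
      linarith
    rw [Finset.sum_sub_distrib] at h5
    have h6 : (t : ℝ) ≤ ∑ x ∈ A, ((walkState r c t).2 x : ℝ) := by
      have : t ≤ ∑ x ∈ A, (walkState r c t).2 x := by omega
      exact_mod_cast this
    have h7 : nsq (0 : Site d) = 0 := by simp [nsq]
    linarith
  obtain ⟨t, ht⟩ := exists_nat_gt K
  linarith [key t]

lemma agg_inv {d : ℕ} (hd : 1 ≤ d) (r : Site d → ℕ → Dir d) (hr : HasDiscrepancy d 1 r) (k : ℕ) :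
    ∃ A : Finset (Site d), (A : Set (Site d)) = (aggState r k).1 ∧ A.card = k + 1 ∧
      (∀ x, x ∉ A → (aggState r k).2.1 x = 0) ∧
      ∀ f : Site d → ℝ, ∑ x ∈ A, f x = (k + 1) * f 0 + ∑ x ∈ A, Wf r f x ((aggState r k).2.1 x) := by
  induction k with
  | zero => exact ⟨{0}, by simp [aggState], by simp, by simp [aggState], by simp [aggState, Wf]⟩
  | succ k ih =>
    obtain ⟨A, hA, hcard, hc, hf⟩ := ih
    set c := (aggState r k).2.1 with hcdef
    set τ := exitSteps r (aggState r k).1 c with hτ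
    have hne : ({t | (walkState r c t).1 ∉ (aggState r k).1} : Set ℕ).Nonempty := by
      obtain ⟨t, ht⟩ := walk_exits hd r hr A c hc
      exact ⟨t, by rw [← hA]; simpa using ht⟩
    have hout : (walkState r c τ).1 ∉ A := by
      have := Nat.sInf_mem hne
      intro hmem
      have h2 : (walkState r c τ).1 ∉ (aggState r k).1 := this
      apply h2
      rw [← hA]
      exact_mod_cast hmem
    have hin : ∀ s < τ, (walkState r c s).1 ∈ A := by
      intro s hs
      have := Nat.notMem_of_lt_sInf hs
      rw [← hA] at this
      simpa using this
    have hst : aggState r (k + 1) = (insert (walkState r c τ).1 (aggState r k).1,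
        (walkState r c τ).2, (aggState r k).2.2 + τ) := rfl
    rw [hst]
    set y := (walkState r c τ).1 with hy
    have h1 := (walk_inv r A c hc (fun _ => 0) τ hin).1
    refine ⟨insert y A, ?_, ?_, ?_, ?_⟩
    · simp [hA]
    · rw [Finset.card_insert_of_notMem hout, hcard]
    · intro x hx
      exact h1 x (fun h => hx (Finset.mem_insert_of_mem h))
    · intro f
      obtain ⟨_, _, h3⟩ := walk_inv r A c hc f τ hin
      rw [Finset.sum_insert hout, Finset.sum_insert hout]
      simp only
      rw [h1 y hout, h3, hf f]
      simp only [Wf, Finset.range_zero, Finset.sum_empty]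
      push_cast
      ring

/-- The main consequence of the dynamics. -/
lemma agg_main {d : ℕ} (hd : 1 ≤ d) (r : Site d → ℕ → Dir d) (hr : HasDiscrepancy d 1 r) (n : ℕ)
    (hn : 1 ≤ n) :
    ∃ A : Finset (Site d), (A : Set (Site d)) = aggRegion r n ∧ A.card = n ∧
      ∀ f : Site d → ℝ, (∀ x ∈ A, 0 ≤ Lp f x) →
        n * f 0 ≤ ∑ x ∈ A, f x + ∑ x ∈ A, ∑ ε : Dir d, |f (x + dirVec d ε) - f x| := by
  obtain ⟨A, hA, hcard, hc, hf⟩ := agg_inv hd r hr (n - 1)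
  refine ⟨A, hA, by omega, fun f hL => ?_⟩
  have h1 := hf f
  have h2 : ((n - 1 : ℕ) : ℝ) + 1 = n := by
    have : n - 1 + 1 = n := by omega
    exact_mod_cast this
  rw [h2] at h1
  have h3 : - ∑ x ∈ A, ∑ ε : Dir d, |f (x + dirVec d ε) - f x| ≤
      ∑ x ∈ A, Wf r f x ((aggState r (n - 1)).2.1 x) := by
    rw [← Finset.sum_neg_distrib]
    refine Finset.sum_le_sum (fun x hx => ?_)
    have := (abs_le.1 (Wf_bound r hr f x ((aggState r (n - 1)).2.1 x))).1
    have h4 : 0 ≤ ((aggState r (n - 1)).2.1 x : ℝ) / (2 * d) * Lp f x :=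
      mul_nonneg (by positivity) (hL x hx)
    linarith
  linarith

lemma osc_barrier {d : ℕ} (hd : 1 ≤ d) (i : Fin d) (y : Site d) (m : ℤ) (ℓ M : ℝ) (hℓ : 1 ≤ ℓ)
    (hM : 0 ≤ M) (g : Site d → ℝ) (hg : ∀ x, g x ≤ M)
    (anti : ∀ x, g (Function.update x i (m - x i)) = - g x)
    (harm : ∀ x : Site d, 0 < (x i : ℝ) - m / 2 → (x i : ℝ) - m / 2 < ℓ →
      (∀ j, j ≠ i → |(x j : ℝ) - y j| < ℓ) → Lp g x = 0)
    (z : Site d) (hz : ∀ j, j ≠ i → z j = y j) (hz0 : 0 < (z i : ℝ) - m / 2)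
    (hz1 : (z i : ℝ) - m / 2 < ℓ) :
    g z ≤ M * (((d : ℝ) - 1) / (4 * ℓ ^ 2) + 2 * d * ((z i : ℝ) - m / 2) / ℓ) := by
  have hd1 : (1 : ℝ) ≤ d := by exact_mod_cast hd
  have hℓ0 : 0 < ℓ := by linarith
  set q : Site d → ℝ := fun x => nsq (x - y) - ((x i : ℝ) - y i) ^ 2 with hq
  set T : Site d → ℝ := fun x => (x i : ℝ) - m / 2 with hT
  set h : Site d → ℝ := fun x =>
    M * (q x / ℓ ^ 2 - ((d : ℝ) - 1) * (T x ^ 2 - 1 / 4) / ℓ ^ 2 + 2 * d * T x / ℓ) with hh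
  have hqe : ∀ x, q x = ∑ j ∈ Finset.univ.erase i, ((x j : ℝ) - y j) ^ 2 := by
    intro x
    have := Finset.add_sum_erase Finset.univ (fun j => ((x j : ℝ) - y j) ^ 2) (Finset.mem_univ i)
    simp only [hq, nsq, Pi.sub_apply]
    push_cast
    linarith
  have hq0 : ∀ x, 0 ≤ q x := fun x => by
    rw [hqe]; exact Finset.sum_nonneg (fun _ _ => sq_nonneg _)
  have hqj : ∀ x j, j ≠ i → ((x j : ℝ) - y j) ^ 2 ≤ q x := fun x j hj => by
    rw [hqe]
    exact Finset.single_le_sum (f := fun j => ((x j : ℝ) - y j) ^ 2) (fun _ _ => sq_nonneg _)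
      (Finset.mem_erase.2 ⟨hj, Finset.mem_univ _⟩)
  have hcoord : ∀ (x : Site d) (k j : Fin d), ((x + dirVec d (k, true)) j : ℝ) =
      x j + if j = k then 1 else 0 := by
    intro x k j; simp [dirVec, unitVec]
  have hcoord' : ∀ (x : Site d) (k j : Fin d), ((x + dirVec d (k, false)) j : ℝ) =
      x j - if j = k then 1 else 0 := by
    intro x k j
    by_cases hjk : j = k
    · subst hjk; simp [dirVec, unitVec]; ring
    · simp [dirVec, unitVec, hjk]
  have hLh : ∀ x, Lp h x = 0 := by
    intro x
    rw [Lp, sum_dir]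
    have e : ∀ k : Fin d, h (x + dirVec d (k, true)) - h x + (h (x + dirVec d (k, false)) - h x) =
        M / ℓ ^ 2 * (2 - 2 * d * if i = k then 1 else 0) := by
      intro k
      have n1 : nsq (x + dirVec d (k, true) - y) = nsq (x - y) + 2 * ((x k : ℝ) - y k) + 1 := by
        have : x + dirVec d (k, true) - y = (x - y) + dirVec d (k, true) := by abel
        rw [this, nsq_add_true]; simp
      have n2 : nsq (x + dirVec d (k, false) - y) = nsq (x - y) - 2 * ((x k : ℝ) - y k) + 1 := by
        have : x + dirVec d (k, false) - y = (x - y) + dirVec d (k, false) := by abel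
        rw [this, nsq_add_false]; simp
      simp only [hh, hq, hT, n1, n2, hcoord, hcoord']
      by_cases hik : i = k
      · subst hik
        simp only [if_true]
        field_simp
        ring
      · simp only [hik, if_false]
        field_simp
        ring
    simp only [e]
    rw [← Finset.mul_sum, Finset.sum_sub_distrib, ← Finset.mul_sum]
    simp
    right; ring
  set S0 : Set (Site d) := {x | 0 < T x ∧ T x < ℓ ∧ ∀ j, j ≠ i → |(x j : ℝ) - y j| < ℓ} with hS0
  have hfin : S0.Finite := by
    refine (Set.finite_Icc (fun j => if j = i then ⌊(m : ℝ) / 2⌋ else ⌊(y j : ℝ) - ℓ⌋ : Site d)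
      (fun j => if j = i then ⌈(m : ℝ) / 2 + ℓ⌉ else ⌈(y j : ℝ) + ℓ⌉)).subset ?_
    rintro x ⟨h1, h2, h3⟩
    simp only [hT] at h1 h2
    constructor
    · intro j
      by_cases hj : j = i
      · subst hj
        simp only [if_true]
        have : (⌊(m : ℝ) / 2⌋ : ℝ) ≤ x j := (Int.floor_le _).trans (by linarith)
        exact_mod_cast this
      · simp only [hj, if_false]
        have h4 := abs_lt.1 (h3 j hj)
        have : (⌊(y j : ℝ) - ℓ⌋ : ℝ) ≤ x j := (Int.floor_le _).trans (by linarith)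
        exact_mod_cast this
    · intro j
      by_cases hj : j = i
      · subst hj
        simp only [if_true]
        have : (x j : ℝ) ≤ ⌈(m : ℝ) / 2 + ℓ⌉ := le_trans (by linarith) (Int.le_ceil _)
        exact_mod_cast this
      · simp only [hj, if_false]
        have h4 := abs_lt.1 (h3 j hj)
        have : (x j : ℝ) ≤ ⌈(y j : ℝ) + ℓ⌉ := le_trans (by linarith) (Int.le_ceil _)
        exact_mod_cast this
  have hsub : ∀ x, Lp (fun x => h x - g x) x = Lp h x - Lp g x := by
    intro x
    simp only [Lp]
    rw [← Finset.sum_sub_distrib]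
    exact Finset.sum_congr rfl (fun _ _ => by ring)
  have hbig : ∀ x, 0 ≤ T x → T x ≤ 2 * ℓ → (ℓ ^ 2 ≤ q x ∨ ℓ ≤ T x) → M ≤ h x := by
    intro x hx0 hx1 hx
    have h1 : M * 1 ≤ h x := by
      apply mul_le_mul_of_nonneg_left _ hM
      have e : q x / ℓ ^ 2 - ((d : ℝ) - 1) * (T x ^ 2 - 1 / 4) / ℓ ^ 2 + 2 * d * T x / ℓ =
        (q x - ((d : ℝ) - 1) * (T x ^ 2 - 1 / 4) + 2 * d * T x * ℓ) / ℓ ^ 2 := by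
        field_simp
      rw [e, le_div_iff₀ (by positivity)]
      have h2 : ((d : ℝ) - 1) * T x * (2 * ℓ - T x) ≥ 0 :=
        mul_nonneg (mul_nonneg (by linarith) hx0) (by linarith)
      rcases hx with hx | hx
      · nlinarith [mul_nonneg hx0 hℓ0.le]
      · nlinarith [hq0 x, mul_le_mul_of_nonneg_right hx hℓ0.le]
    linarith
  have main := min_principle hd hfin.toFinset (fun x => h x - g x)
    (fun x hx _ => by
      rw [hsub, hLh]
      obtain ⟨h1, h2, h3⟩ := hfin.mem_toFinset.1 hx
      rw [harm x h1 h2 h3]; simp)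
    (fun x hx hneg ε hε => by
      obtain ⟨h1, h2, h3⟩ := hfin.mem_toFinset.1 hx
      rw [Set.Finite.mem_toFinset] at hε
      set w := x + dirVec d ε with hw
      obtain ⟨k, b⟩ := ε
      have hwj : ∀ j, j ≠ k → w j = x j := by
        intro j hj
        cases b <;> simp [hw, dirVec, unitVec, hj]
      have hwk : w k = x k + 1 ∨ w k = x k - 1 := by
        cases b
        · right; simp [hw, dirVec, unitVec]; ring
        · left; simp [hw, dirVec, unitVec]
      by_cases hki : k = i
      · subst hki
        have hwo : ∀ j, j ≠ k → |(w j : ℝ) - y j| < ℓ := fun j hj => by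
          rw [hwj j hj]; exact h3 j hj
        have hqq : q w = q x := by
          rw [hqe, hqe]
          refine Finset.sum_congr rfl (fun j hj => ?_)
          rw [hwj j (Finset.ne_of_mem_erase hj)]
        rcases hwk with hwk | hwk
        · have hTw : T w = T x + 1 := by simp only [hT, hwk]; push_cast; ring
          have : ℓ ≤ T w := by
            by_contra hc
            exact hε ⟨by linarith, not_le.1 hc, hwo⟩
          have := hbig w (by linarith) (by linarith) (Or.inr this)
          linarith [hg w]
        · have hTw : T w = T x - 1 := by simp only [hT, hwk]; push_cast; ring
          have h4 : T w ≤ 0 := by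
            by_contra hc
            exact hε ⟨not_le.1 hc, by linarith, hwo⟩
          have h5 : 0 < 2 * x k - m := by
            have : (0 : ℝ) < 2 * (x k : ℝ) - m := by simp only [hT] at h1; linarith
            exact_mod_cast this
          have h6 : 2 * x k - m ≤ 2 := by
            have : 2 * (x k : ℝ) - m ≤ 2 := by rw [hTw] at h4; simp only [hT] at h4; linarith
            exact_mod_cast this
          have h7 : 2 * x k - m = 1 ∨ 2 * x k - m = 2 := by omega
          rcases h7 with h7 | h7
          · -- half-integer case
            have hr : Function.update w k (m - w k) = x := by
              funext j
              by_cases hj : j = k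
              · subst hj; simp [hwk]; omega
              · simp [hj, hwj j hj]
            have h8 := anti w
            rw [hr] at h8
            have h9 : T x = 1 / 2 := by
              have : 2 * (x k : ℝ) - m = 1 := by exact_mod_cast h7
              simp only [hT]; linarith
            have h10 : h x + h w = M * (2 * q x / ℓ ^ 2) := by
              simp only [hh, hTw, h9, hqq]; ring
            have h11 : 0 ≤ M * (2 * q x / ℓ ^ 2) := by
              have := hq0 x; positivity
            have h12 : h x - g x < 0 := hneg
            linarith
          · have hr : Function.update w k (m - w k) = w := by
              funext j
              by_cases hj : j = k
              · subst hj; simp [hwk]; omega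
              · simp [hj]
            have h8 := anti w
            rw [hr] at h8
            have h9 : T w = 0 := by
              have : 2 * (x k : ℝ) - m = 2 := by exact_mod_cast h7
              rw [hTw]; simp only [hT]; linarith
            have h10 : h w = M * (q w / ℓ ^ 2 + ((d : ℝ) - 1) / 4 / ℓ ^ 2) := by
              simp only [hh, h9]; ring
            have h11 : 0 ≤ h w := by
              rw [h10]
              have := hq0 w
              have : 0 ≤ ((d : ℝ) - 1) := by linarith
              positivity
            linarith
      · have hik : i ≠ k := fun h => hki h.symm
        have hTw : T w = T x := by simp only [hT, hwj i hik]
        have hbd : ℓ ≤ |(w k : ℝ) - y k| := by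
          by_contra hc
          refine hε ⟨by linarith, by linarith, fun j hj => ?_⟩
          by_cases hjk : j = k
          · subst hjk; exact not_le.1 hc
          · rw [hwj j hjk]; exact h3 j hj
        have : ℓ ^ 2 ≤ q w := by
          refine le_trans ?_ (hqj w k hki)
          rw [← sq_abs ((w k : ℝ) - y k)]
          exact pow_le_pow_left₀ hℓ0.le hbd 2
        have := hbig w (by linarith) (by linarith) (Or.inl this)
        linarith [hg w])
  have hzS : z ∈ hfin.toFinset := by
    rw [Set.Finite.mem_toFinset]
    refine ⟨hz0, hz1, fun j hj => ?_⟩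
    rw [hz j hj]; simpa using hℓ0
  have h1 := main z hzS
  have hqz : q z = 0 := by
    rw [hqe]
    refine Finset.sum_eq_zero (fun j hj => ?_)
    rw [hz j (Finset.ne_of_mem_erase hj)]; simp
  have h2 : h z ≤ M * (((d : ℝ) - 1) / (4 * ℓ ^ 2) + 2 * d * ((z i : ℝ) - m / 2) / ℓ) := by
    simp only [hh, hqz]
    apply mul_le_mul_of_nonneg_left _ hM
    have e : ((d : ℝ) - 1) / (4 * ℓ ^ 2) + 2 * d * ((z i : ℝ) - m / 2) / ℓ -
      (0 / ℓ ^ 2 - ((d : ℝ) - 1) * (T z ^ 2 - 1 / 4) / ℓ ^ 2 + 2 * d * T z / ℓ) =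
      ((d : ℝ) - 1) * T z ^ 2 / ℓ ^ 2 := by
      simp only [hT]; field_simp; ring
    have : 0 ≤ ((d : ℝ) - 1) * T z ^ 2 / ℓ ^ 2 := by
      have : 0 ≤ ((d : ℝ) - 1) := by linarith
      positivity
    linarith
  have h3 : 0 ≤ h z - g z := h1
  linarith

lemma Lp_refl {d : ℕ} (f : Site d → ℝ) (i : Fin d) (m : ℤ) (x : Site d) :
    Lp (fun x => f (Function.update x i (m - x i))) x = Lp f (Function.update x i (m - x i)) := by
  have key : ∀ k, (f (Function.update (x + dirVec d (k, true)) i (m - (x + dirVec d (k, true)) i)) -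
        f (Function.update x i (m - x i))) +
      (f (Function.update (x + dirVec d (k, false)) i (m - (x + dirVec d (k, false)) i)) -
        f (Function.update x i (m - x i))) =
      (f (Function.update x i (m - x i) + dirVec d (k, true)) - f (Function.update x i (m - x i))) +
      (f (Function.update x i (m - x i) + dirVec d (k, false)) -
        f (Function.update x i (m - x i))) := by
    intro k
    by_cases hk : k = i
    · subst hk
      have e1 : Function.update (x + dirVec d (k, true)) k (m - (x + dirVec d (k, true)) k) =
          Function.update x k (m - x k) + dirVec d (k, false) := by
        funext j
        by_cases hj : j = k
        · subst hj; simp [dirVec, unitVec]; ring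
        · simp [dirVec, unitVec, hj]
      have e2 : Function.update (x + dirVec d (k, false)) k (m - (x + dirVec d (k, false)) k) =
          Function.update x k (m - x k) + dirVec d (k, true) := by
        funext j
        by_cases hj : j = k
        · subst hj; simp [dirVec, unitVec]; ring
        · simp [dirVec, unitVec, hj]
      rw [e1, e2]; ring
    · have hik : i ≠ k := fun h => hk h.symm
      have e1 : ∀ b, Function.update (x + dirVec d (k, b)) i (m - (x + dirVec d (k, b)) i) =
          Function.update x i (m - x i) + dirVec d (k, b) := by
        intro b
        funext j
        by_cases hj : j = i
        · subst hj; cases b <;> simp [dirVec, unitVec, hik]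
        · simp [hj]
      rw [e1, e1]
  rw [Lp, Lp, sum_dir, sum_dir]
  exact Finset.sum_congr rfl (fun k _ => key k)

lemma osc_step {d : ℕ} (hd : 1 ≤ d) (f : Site d → ℝ) (M k ℓ : ℝ) (hf0 : ∀ x, 0 ≤ f x)
    (hfM : ∀ x, f x ≤ M) (hℓ : 1 ≤ ℓ) (hkℓ : k ≤ ℓ)
    (harm : ∀ x : Site d, (∀ j, |(x j : ℝ)| ≤ k + ℓ) → Lp f x = 0) (y : Site d)
    (hy : ∀ j, |(y j : ℝ)| ≤ k) (i : Fin d) :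
    f y ≤ f (Function.update y i 0) + M * d * (k + 1) / ℓ := by
  have hd1 : (1 : ℝ) ≤ d := by exact_mod_cast hd
  have hℓ0 : 0 < ℓ := by linarith
  have hM : 0 ≤ M := (hf0 0).trans (hfM 0)
  have hk : 0 ≤ k := (abs_nonneg _).trans (hy i)
  set m := y i with hm
  set R : Site d → Site d := fun x => Function.update x i (m - x i) with hR
  have hRR : ∀ x, R (R x) = x := by
    intro x; funext j
    by_cases hj : j = i
    · subst hj; simp [hR]
    · simp [hR, hj]
  have hmk := abs_le.1 (hy i)
  have hbound : ∀ t : ℝ, 0 < t → t ≤ k / 2 →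
      M * (((d : ℝ) - 1) / (4 * ℓ ^ 2) + 2 * d * t / ℓ) ≤ M * d * (k + 1) / ℓ := by
    intro t ht0 ht
    rw [mul_assoc M, mul_div_assoc M]
    apply mul_le_mul_of_nonneg_left _ hM
    have e : ((d : ℝ) - 1) / (4 * ℓ ^ 2) ≤ d / ℓ := by
      rw [div_le_div_iff₀ (by positivity) hℓ0]
      nlinarith [mul_le_mul_of_nonneg_left hℓ hℓ0.le, mul_nonneg (sub_nonneg.2 hd1) hℓ0.le,
        mul_nonneg (sub_nonneg.2 hd1) (mul_nonneg hℓ0.le hℓ0.le)]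
    have e2 : 2 * d * t / ℓ ≤ d * k / ℓ := by
      apply div_le_div_of_nonneg_right _ hℓ0.le
      nlinarith
    have e3 : (d : ℝ) * (k + 1) / ℓ = d / ℓ + d * k / ℓ := by ring
    linarith
  have hh : ∀ x : Site d, 0 < (x i : ℝ) - m / 2 → (x i : ℝ) - m / 2 < ℓ →
      (∀ j, j ≠ i → |(x j : ℝ) - y j| < ℓ) → Lp f x = 0 ∧ Lp (fun x => f (R x)) x = 0 := by
    intro x h1 h2 h3
    constructor
    · apply harm
      intro j
      by_cases hj : j = i
      · subst hj
        rw [abs_le]; constructor <;> linarith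
      · have := abs_lt.1 (h3 j hj)
        have h5 := abs_le.1 (hy j)
        rw [abs_le]; constructor <;> linarith
    · rw [hR, Lp_refl]
      apply harm
      intro j
      by_cases hj : j = i
      · subst hj
        simp only [Function.update_self]
        push_cast
        rw [abs_le]; constructor <;> linarith
      · have := abs_lt.1 (h3 j hj)
        have h5 := abs_le.1 (hy j)
        simp only [Function.update_of_ne hj]
        rw [abs_le]; constructor <;> linarith
  have hLsub : ∀ (a b : Site d → ℝ) x, Lp (fun x => a x - b x) x = Lp a x - Lp b x := by
    intro a b x
    simp only [Lp]
    rw [← Finset.sum_sub_distrib]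
    exact Finset.sum_congr rfl (fun _ _ => by ring)
  have hRy : R y = Function.update y i 0 := by simp [hR, hm]
  rcases lt_trichotomy m 0 with hneg | hz | hpos
  · have hmR : (m : ℝ) < 0 := by exact_mod_cast hneg
    have hzi : (Function.update y i 0 : Site d) i = 0 := by simp
    have := osc_barrier hd i y m ℓ M hℓ hM (fun x => f (R x) - f x)
      (fun x => by linarith [hf0 x, hfM (R x)])
      (fun x => by
        change f (R (R x)) - f (R x) = _
        rw [hRR]; ring)
      (fun x h1 h2 h3 => by
        rw [hLsub, (hh x h1 h2 h3).1, (hh x h1 h2 h3).2]; simp)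
      (Function.update y i 0) (fun j hj => by simp [hj])
      (by rw [hzi]; simp; linarith) (by rw [hzi]; simp; linarith)
    have h2 := hbound (((Function.update y i 0 : Site d) i : ℝ) - m / 2)
      (by rw [hzi]; simp; linarith) (by rw [hzi]; simp; linarith)
    have h3 : R (Function.update y i 0) = y := by rw [← hRy, hRR]
    simp only [h3] at this
    linarith
  · have : Function.update y i 0 = y := by
      rw [← hz, hm]; simp
    rw [this]
    have : 0 ≤ M * d * (k + 1) / ℓ := by positivity
    linarith
  · have hmR : (0 : ℝ) < m := by exact_mod_cast hpos
    have := osc_barrier hd i y m ℓ M hℓ hM (fun x => f x - f (R x))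
      (fun x => by linarith [hf0 (R x), hfM x])
      (fun x => by
        change f (R x) - f (R (R x)) = _
        rw [hRR]; ring)
      (fun x h1 h2 h3 => by
        rw [hLsub, (hh x h1 h2 h3).1, (hh x h1 h2 h3).2]; simp)
      y (fun j hj => rfl)
      (by rw [← hm]; linarith) (by rw [← hm]; linarith)
    have h2 := hbound ((y i : ℝ) - m / 2)
      (by rw [← hm]; linarith) (by rw [← hm]; linarith)
    simp only [hRy] at this
    linarith

lemma osc_bound {d : ℕ} (hd : 1 ≤ d) (f : Site d → ℝ) (M k ℓ : ℝ) (hf0 : ∀ x, 0 ≤ f x)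
    (hfM : ∀ x, f x ≤ M) (hℓ : 1 ≤ ℓ) (hkℓ : k ≤ ℓ)
    (harm : ∀ x : Site d, (∀ j, |(x j : ℝ)| ≤ k + ℓ) → Lp f x = 0) (y : Site d)
    (hy : ∀ j, |(y j : ℝ)| ≤ k) :
    f y ≤ f 0 + M * d ^ 2 * (k + 1) / ℓ := by
  have key : ∀ s : Finset (Fin d), f (fun j => if j ∈ s then y j else 0) ≤
      f 0 + s.card * (M * d * (k + 1) / ℓ) := by
    intro s
    induction s using Finset.induction_on with
    | empty =>
      simp only [Finset.notMem_empty, if_false, Finset.card_empty, Nat.cast_zero, zero_mul, add_zero]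
      exact le_refl _
    | insert a s ha ih =>
      have h1 := osc_step hd f M k ℓ hf0 hfM hℓ hkℓ harm
        (fun j => if j ∈ insert a s then y j else 0) (fun j => by
          split_ifs
          · exact hy j
          · simpa using (abs_nonneg _).trans (hy j)) a
      have h2 : Function.update (fun j => if j ∈ insert a s then y j else 0) a 0 =
          fun j => if j ∈ s then y j else 0 := by
        funext j
        by_cases hj : j = a
        · subst hj; simp [ha]
        · simp [hj]
      rw [h2] at h1
      rw [Finset.card_insert_of_notMem ha]
      push_cast
      linarith
  have := key Finset.univ
  simp only [Finset.mem_univ, if_true, Finset.card_univ, Fintype.card_fin] at this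
  calc f y ≤ f 0 + d * (M * d * (k + 1) / ℓ) := this
    _ = _ := by ring

/-- truncated radial power -/
def gF (d : ℕ) (η t : ℝ) : ℝ := (max t (η ^ 2)) ^ (-((d : ℝ) / 2))

def FF (d : ℕ) (η s : ℝ) : ℝ := ∫ t in (1 : ℝ)..s, (1 - gF d η t)

lemma gF_cont (d : ℕ) (η : ℝ) (hη : 0 < η) : Continuous (fun t => 1 - gF d η t) := by
  unfold gF
  refine continuous_const.sub (Continuous.rpow_const (by fun_prop) (fun t => Or.inl ?_))
  have : 0 < max t (η ^ 2) := lt_max_of_lt_right (by positivity)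
  exact this.ne'

lemma FF_deriv (d : ℕ) (η : ℝ) (hη : 0 < η) (s : ℝ) : HasDerivAt (FF d η) (1 - gF d η s) s :=
  intervalIntegral.integral_hasDerivAt_right ((gF_cont d η hη).intervalIntegrable _ _)
    ((gF_cont d η hη).stronglyMeasurableAtFilter _ _) (gF_cont d η hη).continuousAt

lemma gF_anti (d : ℕ) (η : ℝ) (hη : 0 < η) {a b : ℝ} (hab : a ≤ b) : gF d η b ≤ gF d η a := by
  unfold gF
  apply Real.rpow_le_rpow_of_nonpos (lt_max_of_lt_right (by positivity)) (max_le_max_right _ hab)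
  have : (0 : ℝ) ≤ d := by positivity
  linarith

lemma gF_nonneg (d : ℕ) (η : ℝ) (hη : 0 < η) (a : ℝ) : 0 ≤ gF d η a := by
  unfold gF
  exact Real.rpow_nonneg (le_max_of_le_right (by positivity)) _

lemma gF_le (d : ℕ) (η : ℝ) (hη : 0 < η) (a : ℝ) : gF d η a ≤ (η ^ d)⁻¹ := by
  have h1 : gF d η a ≤ (η ^ 2 : ℝ) ^ (-((d : ℝ) / 2)) := by
    unfold gF
    apply Real.rpow_le_rpow_of_nonpos (by positivity) (le_max_right _ _)
    have : (0 : ℝ) ≤ d := by positivity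
    linarith
  refine h1.trans (le_of_eq ?_)
  rw [← Real.rpow_natCast η 2, ← Real.rpow_mul hη.le, ← Real.rpow_natCast η d, ← Real.rpow_neg hη.le]
  congr 1
  push_cast; ring

lemma FF_mvt (d : ℕ) (η : ℝ) (hη : 0 < η) {a b : ℝ} (hab : a < b) :
    ∃ c, a < c ∧ c < b ∧ FF d η b - FF d η a = (1 - gF d η c) * (b - a) := by
  obtain ⟨c, hc, h⟩ := exists_hasDerivAt_eq_slope (FF d η) (fun s => 1 - gF d η s) hab
    (fun x _ => (FF_deriv d η hη x).continuousAt.continuousWithinAt)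
    (fun x _ => FF_deriv d η hη x)
  refine ⟨c, hc.1, hc.2, ?_⟩
  rw [h]
  have : b - a ≠ 0 := by linarith
  field_simp

lemma FF_convex (d : ℕ) (η : ℝ) (hη : 0 < η) (a b : ℝ) :
    FF d η a + (1 - gF d η a) * (b - a) ≤ FF d η b := by
  rcases lt_trichotomy a b with h | h | h
  · obtain ⟨c, h1, h2, h3⟩ := FF_mvt d η hη h
    have := gF_anti d η hη h1.le
    nlinarith
  · subst h; simp
  · obtain ⟨c, h1, h2, h3⟩ := FF_mvt d η hη h
    have := gF_anti d η hη h2.le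
    nlinarith

lemma FF_one (d : ℕ) (η : ℝ) : FF d η 1 = 0 := by simp [FF]

lemma FF_le (d : ℕ) (η : ℝ) (hη : 0 < η) (s : ℝ) (hs : 1 ≤ s) : FF d η s ≤ s - 1 := by
  have := FF_convex d η hη s 1
  rw [FF_one] at this
  nlinarith [gF_nonneg d η hη s]

lemma FF_lower (d : ℕ) (η : ℝ) (hη : 0 < η) (s s1 s2 : ℝ) (h1 : s ≤ s1) (h12 : s1 ≤ s2)
    (h2 : s2 ≤ 1) (h2' : η ^ 2 ≤ s2) :
    (s2 ^ (-((d : ℝ) / 2)) - 1) * (s2 - s1) ≤ FF d η s := by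
  have hs2 : 0 < s2 := lt_of_lt_of_le (by positivity) h2'
  have e1 : gF d η s2 = s2 ^ (-((d : ℝ) / 2)) := by
    unfold gF; rw [max_eq_left h2']
  have e2 : gF d η 1 = 1 := by
    unfold gF; rw [max_eq_left (h2'.trans h2)]; simp
  have h3 := FF_convex d η hη 1 s2
  rw [FF_one, e2] at h3
  have h4 := FF_convex d η hη s2 s
  have h5 : 1 ≤ gF d η s2 := by
    rw [← e2]; exact gF_anti d η hη h2
  rw [← e1]
  nlinarith [mul_nonneg (sub_nonneg.2 h5) (sub_nonneg.2 h1)]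

lemma pow_mvt (p : ℝ) {a b : ℝ} (ha : 0 < a) (hab : a < b) :
    ∃ c, a < c ∧ c < b ∧ b ^ p - a ^ p = p * c ^ (p - 1) * (b - a) := by
  obtain ⟨c, hc, h⟩ := exists_hasDerivAt_eq_slope (fun t : ℝ => t ^ p) (fun t => p * t ^ (p - 1)) hab
    (fun x hx => (Real.continuousAt_rpow_const x p
      (Or.inl (by linarith [hx.1] : (0:ℝ) < x).ne')).continuousWithinAt)
    (fun x hx => Real.hasDerivAt_rpow_const (Or.inl (by linarith [hx.1] : (0:ℝ) < x).ne'))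
  refine ⟨c, hc.1, hc.2, ?_⟩
  rw [h]
  have : b - a ≠ 0 := by linarith
  field_simp

/-- first-order estimate for the power function `1 - t^{-q}` with remainder -/
lemma pow_taylor (q e : ℝ) (hq : 0 < q) (he : 0 < e) {a c : ℝ} (ha : e ≤ a) (hac : a ≤ c) :
    - (q * (q + 1) * e ^ (-q - 2)) * (c - a) ^ 2 ≤
      (a ^ (-q) - c ^ (-q)) - q * a ^ (-q - 1) * (c - a) := by
  rcases hac.eq_or_lt with h | h
  · subst h; simp
  have ha0 : 0 < a := by linarith
  obtain ⟨ξ, h1, h2, h3⟩ := pow_mvt (-q) ha0 h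
  obtain ⟨ζ, h4, h5, h6⟩ := pow_mvt (-q - 1) ha0 h1
  have h7 : ζ ^ (-q - 1 - 1) ≤ e ^ (-q - 2) := by
    rw [show -q - 1 - 1 = -q - 2 by ring]
    exact Real.rpow_le_rpow_of_nonpos he (by linarith) (by linarith)
  have h8 : 0 ≤ ζ ^ (-q - 1 - 1) := Real.rpow_nonneg (by linarith) _
  have h9 : (a ^ (-q) - c ^ (-q)) - q * a ^ (-q - 1) * (c - a) =
      - (q * (q + 1) * ζ ^ (-q - 1 - 1)) * (ξ - a) * (c - a) := by
    have : (a ^ (-q) - c ^ (-q)) - q * a ^ (-q - 1) * (c - a) =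
      q * (ξ ^ (-q - 1) - a ^ (-q - 1)) * (c - a) := by linear_combination (-1 : ℝ) * h3
    rw [this, h6]; ring
  rw [h9]
  have h10 : q * (q + 1) * ζ ^ (-q - 1 - 1) ≤ q * (q + 1) * e ^ (-q - 2) :=
    mul_le_mul_of_nonneg_left h7 (by positivity)
  have h11 : (ξ - a) * (c - a) ≤ (c - a) ^ 2 := by nlinarith
  have h12 : 0 ≤ (ξ - a) * (c - a) := mul_nonneg (by linarith) (by linarith)
  have h13 : 0 ≤ q * (q + 1) * ζ ^ (-q - 1 - 1) := by positivity
  nlinarith [mul_le_mul h10 h11 h12 (h13.trans h10)]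

lemma pow_concave (q : ℝ) (hq : 0 < q) {a c : ℝ} (hc : 0 < c) (hac : c ≤ a) :
    (a ^ (-q) - c ^ (-q)) - q * a ^ (-q - 1) * (c - a) ≤ 0 := by
  rcases hac.eq_or_lt with h | h
  · subst h; simp
  obtain ⟨ξ, h1, h2, h3⟩ := pow_mvt (-q) hc h
  have h4 : a ^ (-q - 1) ≤ ξ ^ (-q - 1) :=
    Real.rpow_le_rpow_of_nonpos (by linarith) h2.le (by linarith)
  rw [h3]
  nlinarith [mul_nonneg (mul_nonneg hq.le (sub_nonneg.2 h4)) (sub_nonneg.2 hac)]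

lemma FF_taylor (d : ℕ) (hd : 1 ≤ d) (η : ℝ) (hη : 0 < η) (a b : ℝ) (ha : η ^ 2 ≤ a)
    (hb : η ^ 2 ≤ b) :
    FF d η a + (1 - gF d η a) * (b - a) +
      (d : ℝ) / 2 * a ^ (-((d : ℝ) / 2) - 1) * (b - a) ^ 2 / 2 -
      ((d : ℝ) / 2 * ((d : ℝ) / 2 + 1) * (η ^ 2) ^ (-((d : ℝ) / 2) - 2)) * |b - a| ^ 3
      ≤ FF d η b := by
  set q : ℝ := (d : ℝ) / 2 with hq
  have hq0 : 0 < q := by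
    have : (1 : ℝ) ≤ d := by exact_mod_cast hd
    rw [hq]; linarith
  set C := q * (q + 1) * (η ^ 2) ^ (-q - 2) with hC
  have hC0 : 0 ≤ C := by positivity
  have hη2 : 0 < η ^ 2 := by positivity
  have hg : ∀ t, η ^ 2 ≤ t → gF d η t = t ^ (-q) := by
    intro t ht; unfold gF; rw [max_eq_left ht]
  set φ : ℝ → ℝ := fun t => FF d η t - (1 - gF d η a) * (t - a) -
    q * a ^ (-q - 1) * (t - a) ^ 2 / 2 with hφ
  have hφd : ∀ t, HasDerivAt φ ((1 - gF d η t) - (1 - gF d η a) - q * a ^ (-q - 1) * (t - a)) t := by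
    intro t
    have h1 := ((hasDerivAt_id t).sub_const a).const_mul (1 - gF d η a)
    have h2 := ((((hasDerivAt_id t).sub_const a).pow 2).const_mul (q * a ^ (-q - 1))).div_const 2
    have h3 := ((FF_deriv d η hη t).sub h1).sub h2
    refine HasDerivAt.congr_deriv (f := φ) h3 ?_
    simp
    ring
  have hmvt : ∀ {a b : ℝ}, a < b → ∃ c, a < c ∧ c < b ∧ φ b - φ a =
      ((1 - gF d η c) - (1 - gF d η a) - (gF d η a - gF d η a) -
        (1 - gF d η c - (1 - gF d η a)) + deriv φ c) * (b - a) := by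
    intro a b hab
    obtain ⟨c, hc, h⟩ := exists_hasDerivAt_eq_slope φ (deriv φ) hab
      (fun x _ => (hφd x).continuousAt.continuousWithinAt)
      (fun x _ => (hφd x).differentiableAt.hasDerivAt)
    refine ⟨c, hc.1, hc.2, ?_⟩
    rw [h]
    have : b - a ≠ 0 := by linarith
    field_simp
    ring
  have hφa : φ a = FF d η a := by simp [hφ]
  have goal : φ a - C * |b - a| ^ 3 ≤ φ b := by
    rcases lt_trichotomy a b with h | h | h
    · obtain ⟨c, h1, h2, h3⟩ := hmvt h
      rw [(hφd c).deriv] at h3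
      have h4 := pow_taylor q (η ^ 2) hq0 hη2 ha h1.le
      rw [← hC] at h4
      rw [hg c (by linarith), hg a ha] at h3
      rw [abs_of_pos (by linarith)]
      have h5 : (c - a) ^ 2 ≤ (b - a) ^ 2 := by nlinarith
      have h6 : - C * (b - a) ^ 2 ≤ (a ^ (-q) - c ^ (-q)) - q * a ^ (-q - 1) * (c - a) := by
        nlinarith
      nlinarith [mul_le_mul_of_nonneg_right h6 (by linarith : 0 ≤ b - a)]
    · subst h; simp
    · obtain ⟨c, h1, h2, h3⟩ := hmvt h
      rw [(hφd c).deriv] at h3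
      have h4 := pow_concave q hq0 (c := c) (a := a) (by linarith) h2.le
      rw [hg c (by linarith), hg a ha, hg b hb] at h3
      have h5 : 0 ≤ C * |b - a| ^ 3 := by positivity
      nlinarith [mul_nonneg (by linarith : 0 ≤ -((a ^ (-q) - c ^ (-q)) - q * a ^ (-q - 1) * (c - a)))
        (by linarith : 0 ≤ a - b)]
  have hφb : φ b = FF d η b - (1 - gF d η a) * (b - a) - q * a ^ (-q - 1) * (b - a) ^ 2 / 2 := rfl
  rw [hφa, hφb] at goal
  linarith

/-- The comparison function. -/
def wF (d : ℕ) (η R : ℝ) (x : Site d) : ℝ := R ^ 2 * FF d η (nsq x / R ^ 2)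

lemma wF_inner {d : ℕ} (η R : ℝ) (hη : 0 < η) (hR : 0 < R) (x : Site d) :
    2 * d * (1 - (η ^ d)⁻¹) ≤ Lp (wF d η R) x := by
  set s := nsq x / R ^ 2 with hs
  have h1 : ∑ ε : Dir d, (1 - gF d η s) * (nsq (x + dirVec d ε) - nsq x) ≤ Lp (wF d η R) x := by
    refine Finset.sum_le_sum (fun ε _ => ?_)
    have := FF_convex d η hη s (nsq (x + dirVec d ε) / R ^ 2)
    unfold wF
    rw [← hs]
    have h2 := mul_le_mul_of_nonneg_left this (sq_nonneg R)
    have e : R ^ 2 * ((1 - gF d η s) * (nsq (x + dirVec d ε) / R ^ 2 - s)) =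
      (1 - gF d η s) * (nsq (x + dirVec d ε) - nsq x) := by
      rw [hs]; field_simp
    linarith
  refine le_trans ?_ h1
  rw [← Finset.mul_sum]
  have : ∑ ε : Dir d, (nsq (x + dirVec d ε) - nsq x) = 2 * d := Lp_nsq x
  rw [this]
  have h3 := gF_le d η hη s
  have h4 : (0 : ℝ) ≤ 2 * d := by positivity
  nlinarith

lemma coord_le {d : ℕ} (x : Site d) (i : Fin d) : (x i : ℝ) ^ 2 ≤ nsq x :=
  Finset.single_le_sum (f := fun i => (x i : ℝ) ^ 2) (fun _ _ => sq_nonneg _) (Finset.mem_univ i)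

lemma nsq_step {d : ℕ} (x : Site d) (ε : Dir d) :
    nsq (x + dirVec d ε) - nsq x = 1 + 2 * (if ε.2 then (x ε.1 : ℝ) else - (x ε.1 : ℝ)) := by
  obtain ⟨i, b⟩ := ε
  cases b
  · rw [nsq_add_false]; simp; ring
  · rw [nsq_add_true]; simp; ring

lemma wF_outer {d : ℕ} (hd : 1 ≤ d) (η R : ℝ) (hη : 0 < η) (hR : 1 ≤ R) (x : Site d)
    (hx1 : (η * R + 1) ^ 2 ≤ nsq x) (hx2 : nsq x ≤ R ^ 2) :
    2 * d * (1 - 27 * ((d : ℝ) / 2 * ((d : ℝ) / 2 + 1) * (η ^ 2) ^ (-((d : ℝ) / 2) - 2)) / R) ≤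
      Lp (wF d η R) x := by
  set s := nsq x / R ^ 2 with hs
  set C := (d : ℝ) / 2 * ((d : ℝ) / 2 + 1) * (η ^ 2) ^ (-((d : ℝ) / 2) - 2) with hC
  have hR0 : 0 < R := by linarith
  have hC0 : 0 ≤ C := by positivity
  set F2 := (d : ℝ) / 2 * s ^ (-((d : ℝ) / 2) - 1) with hF2
  have hsη : η ^ 2 ≤ s := by
    rw [hs, le_div_iff₀ (by positivity)]
    nlinarith [mul_pos hη hR0]
  have hs0 : 0 < s := lt_of_lt_of_le (by positivity) hsη
  have hF20 : 0 ≤ F2 := by positivity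
  have hxi : ∀ ε : Dir d, |(if ε.2 then (x ε.1 : ℝ) else - (x ε.1 : ℝ))| ≤ Real.sqrt (nsq x) := by
    intro ε
    apply Real.le_sqrt_of_sq_le
    rw [sq_abs]
    have := coord_le x ε.1
    split_ifs <;> nlinarith
  have hsq : Real.sqrt (nsq x) ≤ R := by
    rw [Real.sqrt_le_left hR0.le]; exact hx2
  have hsq2 : η * R + 1 ≤ Real.sqrt (nsq x) := Real.le_sqrt_of_sq_le hx1
  have hsqs : Real.sqrt (nsq x) ^ 2 = nsq x := Real.sq_sqrt (nsq_nonneg x)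
  have term : ∀ ε : Dir d, (1 - gF d η s) * (nsq (x + dirVec d ε) - nsq x) +
      F2 / 2 / R ^ 2 * (nsq (x + dirVec d ε) - nsq x) ^ 2 - 27 * C / R ≤
      wF d η R (x + dirVec d ε) - wF d η R x := by
    intro ε
    set s' := nsq (x + dirVec d ε) / R ^ 2 with hs'
    have hst := nsq_step x ε
    set v : ℝ := if ε.2 then (x ε.1 : ℝ) else - (x ε.1 : ℝ) with hv
    have hvb := abs_le.1 (hxi ε)
    have h1 : η ^ 2 ≤ s' := by
      rw [hs', le_div_iff₀ (by positivity)]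
      have : (Real.sqrt (nsq x) - 1) ^ 2 ≤ nsq (x + dirVec d ε) := by nlinarith
      have h2 : (η * R) ^ 2 ≤ (Real.sqrt (nsq x) - 1) ^ 2 :=
        pow_le_pow_left₀ (by positivity) (by linarith) 2
      nlinarith
    have h2 := FF_taylor d hd η hη s s' hsη h1
    rw [← hC, ← hF2] at h2
    have h3 : |s' - s| ≤ 3 / R := by
      have : s' - s = (1 + 2 * v) / R ^ 2 := by
        rw [hs', hs, ← hst]; ring
      rw [this, abs_div, abs_of_pos (by positivity : 0 < R ^ 2), div_le_div_iff₀ (by positivity) hR0]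
      have : |1 + 2 * v| ≤ 3 * R := by
        rw [abs_le]; constructor <;> linarith
      nlinarith
    have h4 : |s' - s| ^ 3 ≤ (3 / R) ^ 3 := pow_le_pow_left₀ (abs_nonneg _) h3 3
    have h5 : C * |s' - s| ^ 3 ≤ C * (3 / R) ^ 3 := mul_le_mul_of_nonneg_left h4 hC0
    have h6 := mul_le_mul_of_nonneg_left h2 (sq_nonneg R)
    have h7 := mul_le_mul_of_nonneg_left h5 (sq_nonneg R)
    have e1 : R ^ 2 * ((1 - gF d η s) * (s' - s)) =
      (1 - gF d η s) * (nsq (x + dirVec d ε) - nsq x) := by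
      rw [hs, hs']; field_simp
    have e2 : R ^ 2 * (F2 * (s' - s) ^ 2 / 2) =
        F2 / 2 / R ^ 2 * (nsq (x + dirVec d ε) - nsq x) ^ 2 := by
      rw [hs, hs']; field_simp
    have e3 : R ^ 2 * (C * (3 / R) ^ 3) = 27 * C / R := by field_simp; ring
    unfold wF
    rw [← hs, ← hs']
    have h6b : R ^ 2 * (FF d η s + (1 - gF d η s) * (s' - s) + F2 * (s' - s) ^ 2 / 2 -
        C * |s' - s| ^ 3) = R ^ 2 * FF d η s + R ^ 2 * ((1 - gF d η s) * (s' - s)) +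
        R ^ 2 * (F2 * (s' - s) ^ 2 / 2) - R ^ 2 * (C * |s' - s| ^ 3) := by ring
    rw [h6b, e1, e2] at h6
    rw [e3] at h7
    linarith
  have hsum := Finset.sum_le_sum (fun ε (_ : ε ∈ (Finset.univ : Finset (Dir d))) => term ε)
  refine le_trans ?_ hsum
  rw [Finset.sum_sub_distrib, Finset.sum_add_distrib, ← Finset.mul_sum, ← Finset.mul_sum]
  have e1 : ∑ ε : Dir d, (nsq (x + dirVec d ε) - nsq x) = 2 * d := Lp_nsq x
  have e2 : ∑ ε : Dir d, (nsq (x + dirVec d ε) - nsq x) ^ 2 = 8 * nsq x + 2 * d := by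
    rw [sum_dir]
    have : ∀ i : Fin d, (nsq (x + dirVec d (i, true)) - nsq x) ^ 2 +
        (nsq (x + dirVec d (i, false)) - nsq x) ^ 2 = 8 * (x i : ℝ) ^ 2 + 2 := by
      intro i; rw [nsq_add_true, nsq_add_false]; ring
    simp only [this]
    rw [Finset.sum_add_distrib, ← Finset.mul_sum]
    simp [nsq, mul_comm]
  have e3 : ∑ ε : Dir d, 27 * C / R = 2 * d * (27 * C / R) := by
    rw [Finset.sum_const, nsmul_eq_mul, Finset.card_univ]
    simp only [Fintype.card_prod, Fintype.card_fin, Fintype.card_bool]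
    push_cast; ring
  rw [e1, e2, e3]
  have e4 : gF d η s = s ^ (-((d : ℝ) / 2)) := by unfold gF; rw [max_eq_left hsη]
  have e5 : F2 * s = (d : ℝ) / 2 * gF d η s := by
    rw [hF2, e4, mul_assoc, ← Real.rpow_add_one hs0.ne']
    congr 2; ring
  have e6 : F2 / 2 / R ^ 2 * (8 * nsq x + 2 * d) = 4 * (F2 * s) + F2 * d / R ^ 2 := by
    rw [hs]; field_simp; ring
  rw [e6, e5]
  have : 0 ≤ F2 * d / R ^ 2 := by positivity
  have e7 : 2 * d * (1 - 27 * C / R) = 2 * d - 2 * d * (27 * C / R) := by ring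
  rw [e7]
  linarith

lemma wF_boundary {d : ℕ} (η R : ℝ) (hη : 0 < η) (hR : 0 < R) (x : Site d)
    (hx1 : R ^ 2 ≤ nsq x) (hx2 : nsq x ≤ (R + 1) ^ 2) : wF d η R x ≤ 2 * R + 1 := by
  unfold wF
  have h1 := FF_le d η hη (nsq x / R ^ 2) (by rw [le_div_iff₀ (by positivity)]; linarith)
  have h2 := mul_le_mul_of_nonneg_left h1 (sq_nonneg R)
  have e : R ^ 2 * (nsq x / R ^ 2 - 1) = nsq x - R ^ 2 := by field_simp
  nlinarith

lemma wF_lower {d : ℕ} (η R ε : ℝ) (hη : 0 < η) (hR : 0 < R) (hε : 0 < ε) (hε1 : ε < 1)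
    (hηε : η ^ 2 ≤ 1 - ε) (x : Site d)
    (hx : nsq x ≤ ((1 - ε) * R) ^ 2) :
    (((1 - ε) ^ (-((d : ℝ) / 2)) - 1) * ((1 - ε) * ε)) * R ^ 2 ≤ wF d η R x := by
  unfold wF
  have h1 := FF_lower d η hη (nsq x / R ^ 2) ((1 - ε) ^ 2) (1 - ε)
    (by rw [div_le_iff₀ (by positivity)]; linarith [mul_pow (1 - ε) R 2]) (by nlinarith)
    (by linarith) hηε
  have e : (1 - ε) - (1 - ε) ^ 2 = (1 - ε) * ε := by ring
  rw [e] at h1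
  nlinarith [mul_le_mul_of_nonneg_left h1 (sq_nonneg R)]


lemma nsq_nbr {d : ℕ} (R : ℝ) (hR : 0 < R) (y : Site d) (hy : nsq y < R ^ 2) (ε : Dir d) :
    nsq (y + dirVec d ε) ≤ (R + 1) ^ 2 := by
  have h1 := nsq_step y ε
  have h2 := coord_le y ε.1
  have h3 : |(y ε.1 : ℝ)| ≤ R := abs_le_of_sq_le_sq (by linarith) hR.le
  have h4 := abs_le.1 h3
  split_ifs at h1 <;> nlinarith

lemma core_ineq {d : ℕ} (hd : 1 ≤ d) (n : ℕ) (D A H I : Finset (Site d)) (R η ε ℓ : ℝ)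
    (hR : 1 ≤ R) (hη : 0 < η) (hε : 0 < ε) (hε1 : ε < 1) (hηε : η ^ 2 ≤ 1 - ε)
    (hD : ∀ x, x ∈ D ↔ nsq x < R ^ 2)
    (hI : ∀ x, x ∈ I ↔ nsq x < (η * R + 1) ^ 2)
    (hA : ∀ f : Site d → ℝ, (∀ x ∈ A, 0 ≤ Lp f x) →
        n * f 0 ≤ ∑ x ∈ A, f x + ∑ x ∈ A, ∑ ε : Dir d, |f (x + dirVec d ε) - f x|)
    (hH : ∀ x, x ∈ H ↔ x ∉ A ∧ (ε * R) ^ 2 ≤ nsq x ∧ nsq x ≤ ((1 - ε) * R) ^ 2)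
    (hℓ : η * R + 1 ≤ ℓ) (hℓ2 : d * (η * R + 1 + ℓ) ^ 2 < (ε * R) ^ 2) :
    ∃ f0 S : ℝ, 0 ≤ f0 ∧ f0 ≤ (R + 1) ^ 2 ∧ 0 ≤ S ∧ S ≤ D.card * (R + 1) ^ 2 ∧
      n * f0 ≤ S + 4 * d * D.card * (R + 1) ∧
      (H.card : ℝ) * ((((1 - ε) ^ (-((d : ℝ) / 2)) - 1) * ((1 - ε) * ε)) * R ^ 2 - (2 * R + 1)) ≤
        2 * d * ((η ^ d)⁻¹ * (I.card * (f0 + (R + 1) ^ 2 * d ^ 2 * (η * R + 1 + 1) / ℓ)) - S +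
          27 * ((d : ℝ) / 2 * ((d : ℝ) / 2 + 1) * (η ^ 2) ^ (-((d : ℝ) / 2) - 2)) / R * S) := by
  have hR0 : 0 < R := by linarith
  have hd1 : (1 : ℝ) ≤ d := by exact_mod_cast hd
  set C := (d : ℝ) / 2 * ((d : ℝ) / 2 + 1) * (η ^ 2) ^ (-((d : ℝ) / 2) - 2) with hC
  have hC0 : 0 ≤ C := by positivity
  set c := ((1 - ε) ^ (-((d : ℝ) / 2)) - 1) * ((1 - ε) * ε) with hc
  have hHD : ∀ x ∈ H, x ∈ D := by
    intro x hx
    rw [hD]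
    have h1 := ((hH x).1 hx).2.2
    have h2 : ((1 - ε) * R) ^ 2 < R ^ 2 :=
      pow_lt_pow_left₀ (by nlinarith) (by nlinarith) (by norm_num)
    linarith
  obtain ⟨f, hf0, hfL⟩ := exists_dirichlet hd D (fun x => if x ∈ H then 1 else 0)
  -- bounds on f
  have hpos : ∀ x, 0 ≤ f x := by
    intro x
    by_cases hx : x ∈ D
    · refine min_principle hd D f (fun x hx _ => ?_) (fun x hx _ e he => ?_) x hx
      · rw [hfL x hx]; split_ifs <;> norm_num
      · rw [hf0 _ he]
    · rw [hf0 _ hx]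
  have hup : ∀ x, f x ≤ (R + 1) ^ 2 := by
    intro x
    by_cases hx : x ∈ D
    · have key := min_principle hd D (fun x => ((R + 1) ^ 2 - nsq x) / (2 * d) - f x)
        (fun x hx _ => ?_) (fun x hx _ e he => ?_) x hx
      · have h1 : ((R + 1) ^ 2 - nsq x) / (2 * d) ≤ (R + 1) ^ 2 := by
          rw [div_le_iff₀ (by positivity)]
          nlinarith [nsq_nonneg x, sq_nonneg (R + 1)]
        linarith
      · have e1 : Lp (fun x => ((R + 1) ^ 2 - nsq x) / (2 * d) - f x) x
            = - (Lp nsq x) / (2 * d) - Lp f x := by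
          unfold Lp
          rw [← Finset.sum_neg_distrib, Finset.sum_div, ← Finset.sum_sub_distrib]
          refine Finset.sum_congr rfl (fun e _ => ?_)
          ring
        rw [e1, Lp_nsq, hfL x hx]
        have e2 : -(2 * (d : ℝ)) / (2 * d) = -1 := by
          rw [neg_div, div_self]; positivity
        rw [e2]
        split_ifs <;> norm_num
      · rw [hf0 _ he, sub_zero]
        have := nsq_nbr R hR0 x ((hD x).1 hx) e
        exact div_nonneg (by linarith) (by positivity)
    · rw [hf0 _ hx]; positivity
  have hLoff : ∀ x, x ∉ D → 0 ≤ Lp f x := by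
    intro x hx
    refine Finset.sum_nonneg (fun e _ => ?_)
    rw [hf0 x hx, sub_zero]; exact hpos _
  set S := ∑ x ∈ D, f x with hS
  have hS0 : 0 ≤ S := Finset.sum_nonneg (fun x _ => hpos x)
  have hS1 : S ≤ D.card * (R + 1) ^ 2 := by
    have := Finset.sum_le_card_nsmul D f ((R + 1) ^ 2) (fun x _ => hup x)
    rwa [nsmul_eq_mul] at this
  refine ⟨f 0, S, hpos 0, hup 0, hS0, hS1, ?_, ?_⟩
  · have h1 := hA f (fun x hx => ?_)
    · have h2 : ∑ x ∈ A, f x ≤ S := by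
        have e : ∑ x ∈ A, f x = ∑ x ∈ A ∩ D, f x := by
          symm
          refine Finset.sum_subset Finset.inter_subset_left (fun x hx hx2 => hf0 x ?_)
          intro h; exact hx2 (Finset.mem_inter.2 ⟨hx, h⟩)
        rw [e]
        exact Finset.sum_le_sum_of_subset_of_nonneg Finset.inter_subset_right
          (fun x _ _ => hpos x)
      have h3 : ∑ x ∈ A, ∑ ε : Dir d, |f (x + dirVec d ε) - f x| ≤ 4 * d * D.card * (R + 1) := by
        refine abs_le_of_sq_le_sq' ?_ (by positivity) |>.2
        refine (grad_l1 D f hf0 A).trans ?_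
        have e : ∑' x, f x * Lp f x = ∑ x ∈ D, f x * Lp f x :=
          tsum_eq_sum (fun x hx => by rw [hf0 x hx, zero_mul])
        have h4 : - S ≤ ∑' x, f x * Lp f x := by
          rw [e, hS, ← Finset.sum_neg_distrib]
          refine Finset.sum_le_sum (fun x hx => ?_)
          rw [hfL x hx]
          have := hpos x
          split_ifs <;> linarith
        have h5 : 4 * d * (D.card : ℝ) * (-2 * ∑' x, f x * Lp f x) ≤
            4 * d * (D.card : ℝ) * (2 * (D.card * (R + 1) ^ 2)) :=
          mul_le_mul_of_nonneg_left (by linarith) (by positivity)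
        refine h5.trans ?_
        have h6 : 0 ≤ ((D.card : ℝ) * (R + 1)) ^ 2 := sq_nonneg _
        have h7 : (8 : ℝ) * d ≤ 16 * d ^ 2 := by nlinarith
        nlinarith [mul_le_mul_of_nonneg_right h7 h6]
      linarith
    · by_cases hxD : x ∈ D
      · have : x ∉ H := fun h => ((hH x).1 h).1 hx
        rw [hfL x hxD]; simp [this]
      · exact hLoff x hxD
  · -- summation by parts
    set w' : Site d → ℝ := fun x => wF d η R x - (2 * R + 1) with hw'
    have hLw : ∀ x, Lp w' x = Lp (wF d η R) x := by
      intro x; unfold Lp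
      refine Finset.sum_congr rfl (fun e _ => ?_)
      simp [hw']
    obtain ⟨hsum, hparts⟩ := sum_by_parts D f w' hf0
    have e1 : ∑' x, f x * Lp w' x = ∑ x ∈ D, f x * Lp (wF d η R) x := by
      rw [tsum_eq_sum (s := D) (fun x hx => by rw [hf0 x hx, zero_mul])]
      exact Finset.sum_congr rfl (fun x _ => by rw [hLw])
    have hpt : ∀ x, w' x * Lp f x ≤ if x ∈ H then - w' x else 0 := by
      intro x
      by_cases hx : x ∈ D
      · rw [hfL x hx]; split_ifs <;> simp
      · have hxH : x ∉ H := fun h => hx (hHD x h)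
        rw [if_neg hxH]
        by_cases h0 : Lp f x = 0
        · rw [h0, mul_zero]
        · refine mul_nonpos_of_nonpos_of_nonneg ?_ (hLoff x hx)
          have : ∃ e : Dir d, x + dirVec d e ∈ D := by
            by_contra hno
            push Not at hno
            apply h0
            refine Finset.sum_eq_zero (fun e _ => ?_)
            rw [hf0 _ (hno e), hf0 _ hx, sub_zero]
          obtain ⟨e, he⟩ := this
          have hn := nsq_nbr R hR0 (x + dirVec d e) ((hD _).1 he) (negDir e)
          rw [dirVec_negDir, add_neg_cancel_right] at hn
          have := wF_boundary η R hη hR0 x (not_lt.1 (fun h => hx ((hD x).2 h))) hn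
          simp only [hw']; linarith
    have hs2 : Summable (fun x => if x ∈ H then - w' x else 0) :=
      summable_fin H _ (fun x hx => by simp [hx])
    have h2 := hsum.tsum_le_tsum hpt hs2
    have e2 : ∑' x, (if x ∈ H then - w' x else 0) = ∑ x ∈ H, - w' x := by
      rw [tsum_eq_sum (s := H) (fun x hx => by simp [hx])]
      exact Finset.sum_congr rfl (fun x hx => by simp [hx])
    have h3 : ∑ x ∈ H, - w' x ≤ H.card * (-(c * R ^ 2 - (2 * R + 1))) := by
      rw [← nsmul_eq_mul]
      refine Finset.sum_le_card_nsmul H _ _ (fun x hx => ?_)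
      have := wF_lower η R ε hη hR0 hε hε1 hηε x ((hH x).1 hx).2.2
      simp only [hw']; linarith
    rw [← hparts, e1, e2] at h2
    -- pointwise bound
    have h4 : ∀ x ∈ D, - (2 * d * (-1 + 27 * C / R) * f x +
        (if x ∈ I then 2 * d * (η ^ d)⁻¹ * f x else 0)) ≤ f x * Lp (wF d η R) x := by
      intro x hx
      have hfx := hpos x
      split_ifs with hxI
      · have h5 := mul_le_mul_of_nonneg_left (wF_inner η R hη hR0 x) hfx
        have h6 : 0 ≤ 2 * d * (27 * C / R) * f x := by positivity
        linarith
      · have h5 := mul_le_mul_of_nonneg_left (wF_outer hd η R hη hR x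
          (not_lt.1 (fun h => hxI ((hI x).2 h))) ((hD x).1 hx).le) hfx
        rw [← hC] at h5
        linarith
    have h5 := Finset.sum_le_sum h4
    rw [Finset.sum_neg_distrib, Finset.sum_add_distrib, ← Finset.mul_sum, ← hS] at h5
    have h6 : ∑ x ∈ D, (if x ∈ I then 2 * d * (η ^ d)⁻¹ * f x else 0) ≤
        2 * d * (η ^ d)⁻¹ * (I.card * (f 0 + (R + 1) ^ 2 * d ^ 2 * (η * R + 1 + 1) / ℓ)) := by
      rw [← Finset.sum_filter, ← Finset.mul_sum]
      refine mul_le_mul_of_nonneg_left ?_ (by positivity)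
      have h7 : ∑ x ∈ D.filter (· ∈ I), f x ≤ ∑ x ∈ I, f x :=
        Finset.sum_le_sum_of_subset_of_nonneg
          (fun x hx => (Finset.mem_filter.1 hx).2) (fun x _ _ => hpos x)
      refine h7.trans ?_
      rw [← nsmul_eq_mul]
      refine Finset.sum_le_card_nsmul I _ _ (fun y hy => ?_)
      have hηR : 0 < η * R := by positivity
      refine osc_bound hd f ((R + 1) ^ 2) (η * R + 1) ℓ hpos hup (by linarith) hℓ
        (fun x hx => ?_) y (fun j => ?_)
      · have h8 : nsq x ≤ d * (η * R + 1 + ℓ) ^ 2 := by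
          unfold nsq
          have := Finset.sum_le_card_nsmul (Finset.univ : Finset (Fin d))
            (fun i => (x i : ℝ) ^ 2) ((η * R + 1 + ℓ) ^ 2) (fun i _ => sq_le_sq' 
              (by linarith [(abs_le.1 (hx i)).1]) (abs_le.1 (hx i)).2)
          rw [nsmul_eq_mul] at this
          simpa using this
        have h9 : (ε * R) ^ 2 < R ^ 2 :=
          pow_lt_pow_left₀ (by nlinarith) (by positivity) (by norm_num)
        have hxH : x ∉ H := fun h => by linarith [((hH x).1 h).2.1]
        rw [hfL x ((hD x).2 (by linarith)), if_neg hxH, neg_zero]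
      · exact abs_le_of_sq_le_sq ((coord_le y j).trans ((hI y).1 hy).le) (by linarith)
    linarith


/-- half-open unit cube around a lattice point -/
def hbox (d : ℕ) (x : Site d) : Set (EuclideanSpace ℝ (Fin d)) :=
  {z | ∀ i, z i ∈ Set.Ico ((x i : ℝ) - 1 / 2) ((x i : ℝ) + 1 / 2)}

def cbox (d : ℕ) (x : Site d) : Set (EuclideanSpace ℝ (Fin d)) :=
  {z | ∀ i, z i ∈ Set.Icc ((x i : ℝ) - 1 / 2) ((x i : ℝ) + 1 / 2)}

lemma hbox_eq {d : ℕ} (x : Site d) : hbox d x = (MeasurableEquiv.toLp 2 (Fin d → ℝ)).symm ⁻¹'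
    (Set.univ.pi fun i => Set.Ico ((x i : ℝ) - 1 / 2) ((x i : ℝ) + 1 / 2)) := by
  ext z; simp [hbox]

lemma cbox_eq {d : ℕ} (x : Site d) : cbox d x = (MeasurableEquiv.toLp 2 (Fin d → ℝ)).symm ⁻¹'
    (Set.univ.pi fun i => Set.Icc ((x i : ℝ) - 1 / 2) ((x i : ℝ) + 1 / 2)) := by
  ext z; simp [cbox, Pi.le_def, forall_and]

lemma hbox_meas {d : ℕ} (x : Site d) : MeasurableSet (hbox d x) := by
  rw [hbox_eq]
  exact (MeasurableEquiv.toLp 2 (Fin d → ℝ)).symm.measurable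
    (MeasurableSet.univ_pi (fun i => measurableSet_Ico))

lemma cbox_meas {d : ℕ} (x : Site d) : MeasurableSet (cbox d x) := by
  rw [cbox_eq]
  exact (MeasurableEquiv.toLp 2 (Fin d → ℝ)).symm.measurable
    (MeasurableSet.univ_pi (fun i => measurableSet_Icc))

lemma hbox_vol {d : ℕ} (x : Site d) : volume (hbox d x) = 1 := by
  rw [hbox_eq, (EuclideanSpace.volume_preserving_symm_measurableEquiv_toLp (Fin d)).measure_preimage_equiv,
    volume_pi_pi]
  simp
  norm_num

lemma cbox_vol {d : ℕ} (x : Site d) : volume (cbox d x) = 1 := by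
  rw [cbox_eq, (EuclideanSpace.volume_preserving_symm_measurableEquiv_toLp (Fin d)).measure_preimage_equiv,
    volume_pi_pi]
  simp
  norm_num

lemma hbox_disj {d : ℕ} (x y : Site d) (h : x ≠ y) : Disjoint (hbox d x) (hbox d y) := by
  rw [Set.disjoint_left]
  intro z hx hy
  apply h
  funext i
  have h1 := hx i
  have h2 := hy i
  rw [Set.mem_Ico] at h1 h2
  have h3 : (x i : ℝ) < y i + 1 := by linarith
  have h4 : (y i : ℝ) < x i + 1 := by linarith
  have h5 : x i < y i + 1 := by exact_mod_cast h3
  have h6 : y i < x i + 1 := by exact_mod_cast h4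
  omega

lemma hbox_cover {d : ℕ} (z : EuclideanSpace ℝ (Fin d)) : z ∈ hbox d (fun i => ⌊z i + 1 / 2⌋) := by
  intro i
  constructor
  · have := Int.floor_le (z i + 1 / 2); linarith
  · have := Int.lt_floor_add_one (z i + 1 / 2); linarith

/-- embedding of lattice points -/
def emb {d : ℕ} (x : Site d) : EuclideanSpace ℝ (Fin d) := WithLp.toLp 2 (fun i => (x i : ℝ))

lemma emb_norm {d : ℕ} (x : Site d) : ‖emb x‖ = Real.sqrt (nsq x) := by
  rw [EuclideanSpace.norm_eq]; simp [emb, nsq]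

lemma cbox_dist {d : ℕ} (x : Site d) (z : EuclideanSpace ℝ (Fin d)) (hz : z ∈ cbox d x) :
    ‖z - emb x‖ ≤ Real.sqrt d := by
  rw [EuclideanSpace.norm_eq]
  apply Real.sqrt_le_sqrt
  have : ∀ i ∈ (Finset.univ : Finset (Fin d)), ‖(z - emb x) i‖ ^ 2 ≤ (1 : ℝ) := by
    intro i _
    have h := hz i
    rw [Set.mem_Icc] at h
    have h2 : ‖(z - emb x) i‖ ≤ 1 := by
      simp only [emb, PiLp.sub_apply, Real.norm_eq_abs]
      rw [abs_le]; constructor <;> linarith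
    exact pow_le_one₀ (norm_nonneg _) h2
  have := Finset.sum_le_card_nsmul _ _ _ this
  simpa using this

lemma hbox_sub {d : ℕ} (x : Site d) : hbox d x ⊆ cbox d x :=
  fun _ hz i => Set.Ico_subset_Icc_self (hz i)

lemma vol_hboxes {d : ℕ} (F : Finset (Site d)) : volume (⋃ x ∈ F, hbox d x) = F.card := by
  rw [measure_biUnion_finset (fun x _ y _ h => hbox_disj x y h) (fun x _ => hbox_meas x)]
  simp [hbox_vol]

lemma box_eq {d : ℕ} (F : Finset (Site d)) : box d (F : Set (Site d)) = ⋃ x ∈ F, cbox d x := by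
  ext z
  simp only [box, cbox, Set.mem_ofPred_eq, Set.mem_iUnion, Finset.mem_coe, exists_prop, Set.mem_Icc,
    abs_le]
  constructor
  · rintro ⟨x, hx, h⟩
    exact ⟨x, hx, fun i => ⟨by linarith [(h i).1], by linarith [(h i).2]⟩⟩
  · rintro ⟨x, hx, h⟩
    exact ⟨x, hx, fun i => ⟨by linarith [(h i).1], by linarith [(h i).2]⟩⟩

lemma box_meas {d : ℕ} (F : Finset (Site d)) : MeasurableSet (box d (F : Set (Site d))) := by
  rw [box_eq]; exact Finset.measurableSet_biUnion _ (fun x _ => cbox_meas x)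

lemma vol_box_le {d : ℕ} (F : Finset (Site d)) : volume (box d (F : Set (Site d))) ≤ F.card := by
  rw [box_eq]
  refine (measure_biUnion_finset_le _ _).trans ?_
  simp [cbox_vol]

lemma ballVol_pos (d : ℕ) : 0 < ballVol d :=
  ENNReal.toReal_pos (Metric.measure_ball_pos _ _ one_pos).ne' measure_ball_lt_top.ne

lemma vol_cball (d : ℕ) (ρ : ℝ) (hρ : 0 ≤ ρ) :
    volume (Metric.closedBall (0 : EuclideanSpace ℝ (Fin d)) ρ) = ENNReal.ofReal (ballVol d * ρ ^ d) := by
  rw [Measure.addHaar_closedBall _ _ hρ, finrank_euclideanSpace, Fintype.card_fin, mul_comm,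
    ENNReal.ofReal_mul (ballVol_pos d).le, ballVol, ENNReal.ofReal_toReal measure_ball_lt_top.ne]

lemma count_le {d : ℕ} (ρ : ℝ) (hρ : 0 ≤ ρ) (F : Finset (Site d)) (hF : ∀ x ∈ F, nsq x ≤ ρ ^ 2) :
    (F.card : ℝ) ≤ ballVol d * (ρ + Real.sqrt d) ^ d := by
  have h0 : 0 ≤ ρ + Real.sqrt d := by positivity
  have h1 : (⋃ x ∈ F, hbox d x) ⊆ Metric.closedBall 0 (ρ + Real.sqrt d) := by
    intro z hz
    simp only [Set.mem_iUnion] at hz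
    obtain ⟨x, hx, hz⟩ := hz
    have h2 := cbox_dist x z (hbox_sub x hz)
    have h3 : ‖emb x‖ ≤ ρ := by
      rw [emb_norm, Real.sqrt_le_left hρ]; exact hF x hx
    rw [mem_closedBall_zero_iff]
    calc ‖z‖ = ‖emb x + (z - emb x)‖ := by congr 1; abel
      _ ≤ _ := (norm_add_le _ _).trans (by linarith)
  have h2 := measure_mono (μ := volume) h1
  rw [vol_hboxes, vol_cball _ _ h0] at h2
  have h3 := ENNReal.toReal_mono ENNReal.ofReal_ne_top h2
  rwa [ENNReal.toReal_natCast, ENNReal.toReal_ofReal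
    (mul_nonneg (ballVol_pos d).le (pow_nonneg h0 d))] at h3

lemma nsq_finite (d : ℕ) (ρ : ℝ) : {x : Site d | nsq x < ρ ^ 2}.Finite := by
  have : {x : Site d | nsq x < ρ ^ 2} ⊆
      Set.univ.pi (fun _ : Fin d => Set.Icc (-⌈|ρ|⌉) ⌈|ρ|⌉) := by
    intro x hx i _
    have h1 : |(x i : ℝ)| ≤ |ρ| := by
      apply sq_le_sq.1; exact (coord_le x i).trans hx.le
    have h2 : |(x i : ℝ)| ≤ (⌈|ρ|⌉ : ℝ) := h1.trans (Int.le_ceil _)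
    have h3 : |x i| ≤ ⌈|ρ|⌉ := by exact_mod_cast h2
    exact abs_le.1 h3
  exact (Set.Finite.pi (fun _ => Set.finite_Icc _ _)).subset this

/-- measure of the missing part -/
lemma missing_vol {d : ℕ} (A H : Finset (Site d)) (R ε : ℝ) (hR : 0 < R) (hε : 0 < ε)
    (hs : Real.sqrt d ≤ (1 - ε) * R)
    (hH : ∀ x, x ∈ H ↔ x ∉ A ∧ (ε * R) ^ 2 ≤ nsq x ∧ nsq x ≤ ((1 - ε) * R) ^ 2) :
    volume (Metric.closedBall 0 R \ box d (A : Set (Site d))) ≤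
      ENNReal.ofReal (H.card + ballVol d * (ε * R + Real.sqrt d) ^ d +
        (ballVol d * R ^ d - ballVol d * ((1 - ε) * R - Real.sqrt d) ^ d)) := by
  have hω := ballVol_pos d
  have hsd : 0 ≤ Real.sqrt d := Real.sqrt_nonneg _
  have hr : 0 ≤ (1 - ε) * R - Real.sqrt d := by linarith
  have hrR : (1 - ε) * R - Real.sqrt d ≤ R := by nlinarith
  have hle : ballVol d * ((1 - ε) * R - Real.sqrt d) ^ d ≤ ballVol d * R ^ d :=
    mul_le_mul_of_nonneg_left (pow_le_pow_left₀ hr hrR d) hω.le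
  have hsub : Metric.closedBall 0 R \ box d (A : Set (Site d)) ⊆
      ((⋃ x ∈ H, hbox d x) ∪ Metric.closedBall 0 (ε * R + Real.sqrt d)) ∪
        (Metric.closedBall 0 R \ Metric.closedBall 0 ((1 - ε) * R - Real.sqrt d)) := by
    rintro z ⟨hz1, hz2⟩
    set x : Site d := fun i => ⌊z i + 1 / 2⌋ with hx
    have hzx : z ∈ hbox d x := hbox_cover z
    have hdist := cbox_dist x z (hbox_sub x hzx)
    have hxA : x ∉ A := by
      intro h
      apply hz2
      rw [box_eq]
      simp only [Set.mem_iUnion]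
      exact ⟨x, h, hbox_sub x hzx⟩
    have hn := Real.sq_sqrt (nsq_nonneg x)
    have hn0 := Real.sqrt_nonneg (nsq x)
    by_cases h1 : (ε * R) ^ 2 ≤ nsq x
    · by_cases h2 : nsq x ≤ ((1 - ε) * R) ^ 2
      · left; left
        simp only [Set.mem_iUnion]
        exact ⟨x, (hH x).2 ⟨hxA, h1, h2⟩, hzx⟩
      · right
        refine ⟨hz1, fun h => h2 ?_⟩
        rw [mem_closedBall_zero_iff] at h
        have h3 : ‖emb x‖ ≤ ‖z‖ + ‖z - emb x‖ := by
          calc ‖emb x‖ = ‖z - (z - emb x)‖ := by congr 1; abel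
            _ ≤ _ := norm_sub_le _ _
        rw [emb_norm] at h3
        rw [← hn]
        exact pow_le_pow_left₀ hn0 (by linarith) 2
    · left; right
      rw [mem_closedBall_zero_iff]
      have h3 : ‖z‖ ≤ ‖emb x‖ + ‖z - emb x‖ := by
        calc ‖z‖ = ‖emb x + (z - emb x)‖ := by congr 1; abel
          _ ≤ _ := norm_add_le _ _
      rw [emb_norm] at h3
      have h4 : Real.sqrt (nsq x) ≤ ε * R := by
        rw [Real.sqrt_le_left (by positivity)]; linarith
      linarith
  refine (measure_mono hsub).trans ((measure_union_le _ _).trans ?_)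
  rw [ENNReal.ofReal_add (by positivity) (by linarith), ENNReal.ofReal_add (by positivity) (by positivity)]
  refine add_le_add ((measure_union_le _ _).trans (add_le_add ?_ ?_)) ?_
  · rw [vol_hboxes, ENNReal.ofReal_natCast]
  · rw [vol_cball _ _ (by positivity)]
  · rw [measure_sdiff (Metric.closedBall_subset_closedBall hrR)
      Metric.isClosed_closedBall.measurableSet.nullMeasurableSet measure_closedBall_lt_top.ne,
      vol_cball _ _ hr, vol_cball _ _ hR.le, ENNReal.ofReal_sub _ (by positivity)]


lemma pow_near (d : ℕ) (a τ : ℝ) (hτ : 0 < τ) :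
    ∃ R0 : ℝ, ∀ R, R0 ≤ R → (1 + a / R) ^ d ≤ 1 + τ := by
  have h1 : Tendsto (fun R : ℝ => (1 + a / R) ^ d) atTop (nhds ((1 + 0) ^ d)) :=
    ((tendsto_const_nhds).add (tendsto_const_nhds.div_atTop tendsto_id)).pow d
  have h2 : ∀ᶠ R : ℝ in atTop, (1 + a / R) ^ d < 1 + τ :=
    h1.eventually (gt_mem_nhds (by simpa using hτ))
  obtain ⟨R0, h⟩ := eventually_atTop.1 h2
  exact ⟨R0, fun R hR => (h R hR).le⟩

set_option maxHeartbeats 2000000 in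
lemma final_arith (d n κ c τ η ε C R f0 S K Hc Dc Q : ℝ) (hd : 1 ≤ d) (hn : 0 < n) (hκ : 0 < κ)
    (hc : 0 < c) (hτ0 : 0 < τ) (hτ1 : τ ≤ 1) (hτ : 64 * d * τ ≤ κ * c)
    (hη0 : 0 < η) (hε : 0 < ε) (hη : 1024 * d ^ 4 * η ≤ κ * c * ε) (hC : 0 ≤ C)
    (hR : 1 ≤ R) (hK : K = 3 * κ + 32 * d ^ 2 + 432 * d * C) (hRK : 2 * K < κ * c * R)
    (hRη : 2 ≤ η * R)
    (hf0 : 0 ≤ f0) (hf1 : f0 ≤ (R + 1) ^ 2) (hS0 : 0 ≤ S) (hS1 : S ≤ Dc * (R + 1) ^ 2)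
    (hDc : Dc ≤ 2 * n) (hQ0 : 0 ≤ Q) (hQ : Q ≤ (1 + τ) * n)
    (h1 : n * f0 ≤ S + 4 * d * Dc * (R + 1))
    (hHc : κ * n ≤ Hc)
    (h2 : Hc * (c * R ^ 2 - (2 * R + 1)) ≤
      2 * d * (Q * (f0 + (R + 1) ^ 2 * d ^ 2 * (η * R + 1 + 1) / (ε * R / (4 * d))) - S +
        27 * C / R * S)) : False := by
  have hR0 : 0 < R := by linarith
  have hM : (R + 1) ^ 2 ≤ 4 * R ^ 2 := by nlinarith
  have hosc : (R + 1) ^ 2 * d ^ 2 * (η * R + 1 + 1) / (ε * R / (4 * d)) ≤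
      32 * d ^ 3 * (η / ε) * R ^ 2 := by
    rw [div_le_iff₀ (by positivity)]
    have e : 32 * d ^ 3 * (η / ε) * R ^ 2 * (ε * R / (4 * d)) = 4 * R ^ 2 * d ^ 2 * (2 * (η * R)) := by
      field_simp; ring
    rw [e]
    gcongr
    linarith
  set o := (R + 1) ^ 2 * d ^ 2 * (η * R + 1 + 1) / (ε * R / (4 * d)) with ho
  have ho0 : 0 ≤ o := by positivity
  have a1 : Q * (f0 + o) ≤ (1 + τ) * n * (f0 + o) :=
    mul_le_mul_of_nonneg_right hQ (by linarith)
  have a2 : (1 + τ) * n * o ≤ 2 * n * (32 * d ^ 3 * (η / ε) * R ^ 2) := by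
    have : (1 + τ) * n ≤ 2 * n := by nlinarith
    exact mul_le_mul this hosc ho0 (by positivity)
  have a3 : τ * n * f0 ≤ τ * n * (4 * R ^ 2) :=
    mul_le_mul_of_nonneg_left (hf1.trans hM) (by positivity)
  have a4 : 4 * d * Dc * (R + 1) ≤ n * (16 * d * R) := by
    have h : Dc * (R + 1) ≤ 2 * n * (2 * R) := by
      refine mul_le_mul hDc (by linarith) (by linarith) (by positivity)
    have := mul_le_mul_of_nonneg_left h (by positivity : 0 ≤ 4 * d)
    linarith
  have hS2 : S ≤ 2 * n * (4 * R ^ 2) :=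
    hS1.trans (mul_le_mul hDc hM (sq_nonneg _) (by positivity))
  have a5 : 27 * C / R * S ≤ n * (216 * C * R) := by
    have := mul_le_mul_of_nonneg_left hS2 (by positivity : 0 ≤ 27 * C / R)
    refine this.trans (le_of_eq ?_)
    field_simp; ring
  have b1 : 2 * d * (Q * (f0 + o) - S + 27 * C / R * S) ≤
      2 * d * (n * (τ * (4 * R ^ 2) + 16 * d * R + 64 * d ^ 3 * (η / ε) * R ^ 2 + 216 * C * R)) :=
    mul_le_mul_of_nonneg_left (by linarith) (by positivity)
  have hηε : 1024 * d ^ 4 * (η / ε) ≤ κ * c := by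
    have : 1024 * d ^ 4 * (η / ε) = 1024 * d ^ 4 * η / ε := by ring
    rw [this, div_le_iff₀ hε]; exact hη
  have b2 : 2 * d * (τ * (4 * R ^ 2) + 16 * d * R + 64 * d ^ 3 * (η / ε) * R ^ 2 + 216 * C * R) ≤
      κ * c / 4 * R ^ 2 + (32 * d ^ 2 + 432 * d * C) * R := by
    have x1 := mul_le_mul_of_nonneg_right hτ (sq_nonneg R)
    have x2 := mul_le_mul_of_nonneg_right hηε (sq_nonneg R)
    linarith
  have hKpos : 0 ≤ K := by rw [hK]; positivity
  have hcR : 0 ≤ c * R ^ 2 - (2 * R + 1) := by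
    have x1 : 6 * κ ≤ 2 * K := by
      rw [hK]
      have y1 : 0 ≤ d * C := mul_nonneg (by linarith) hC
      have y2 := sq_nonneg d
      linarith
    have x2 : 6 < c * R := by
      by_contra hcon
      have : κ * (c * R) ≤ κ * 6 := mul_le_mul_of_nonneg_left (not_lt.1 hcon) hκ.le
      linarith
    have x3 := mul_le_mul_of_nonneg_right x2.le hR0.le
    linarith
  have b3 : κ * n * (c * R ^ 2 - (2 * R + 1)) ≤ Hc * (c * R ^ 2 - (2 * R + 1)) :=
    mul_le_mul_of_nonneg_right hHc hcR
  have b4 : n * (κ * (c * R ^ 2 - (2 * R + 1))) ≤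
      n * (κ * c / 4 * R ^ 2 + (32 * d ^ 2 + 432 * d * C) * R) := by
    have := mul_le_mul_of_nonneg_left b2 hn.le
    linarith
  have b5 := le_of_mul_le_mul_left b4 hn
  have b6 : κ * (2 * R + 1) ≤ 3 * κ * R := by nlinarith
  have b7 : 3 / 4 * (κ * c * R) * R ≤ K * R := by
    rw [hK]; linarith
  have b8 := le_of_mul_le_mul_right b7 hR0
  linarith

set_option maxHeartbeats 2000000 in
lemma core {d : ℕ} (hd : 1 ≤ d) (ε κ : ℝ) (hε : 0 < ε) (hε1 : ε < 1) (hκ : 0 < κ) :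
    ∃ R0 : ℝ, ∀ R, R0 ≤ R → ∀ n : ℕ, ballVol d * R ^ d = n → ∀ A H : Finset (Site d),
      (∀ f : Site d → ℝ, (∀ x ∈ A, 0 ≤ Lp f x) →
        n * f 0 ≤ ∑ x ∈ A, f x + ∑ x ∈ A, ∑ ε : Dir d, |f (x + dirVec d ε) - f x|) →
      (∀ x, x ∈ H ↔ x ∉ A ∧ (ε * R) ^ 2 ≤ nsq x ∧ nsq x ≤ ((1 - ε) * R) ^ 2) →
      (H.card : ℝ) < κ * n := by
  have hd1 : (1 : ℝ) ≤ d := by exact_mod_cast hd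
  have hω := ballVol_pos d
  set c := ((1 - ε) ^ (-((d : ℝ) / 2)) - 1) * ((1 - ε) * ε) with hcdef
  have hc : 0 < c := by
    have h1 : 1 < (1 - ε) ^ (-((d : ℝ) / 2)) :=
      Real.one_lt_rpow_of_pos_of_lt_one_of_neg (by linarith) (by linarith) (by linarith)
    exact mul_pos (by linarith) (mul_pos (by linarith) hε)
  obtain ⟨τ, hτ0, hτ1, hτ⟩ : ∃ τ : ℝ, 0 < τ ∧ τ ≤ 1 ∧ 64 * d * τ ≤ κ * c := by
    refine ⟨min 1 (κ * c / (64 * d)), lt_min one_pos (by positivity), min_le_left _ _, ?_⟩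
    have := mul_le_mul_of_nonneg_left (min_le_right 1 (κ * c / (64 * d)))
      (by positivity : (0 : ℝ) ≤ 64 * d)
    refine this.trans (le_of_eq ?_)
    field_simp
  obtain ⟨η, hη0, hη1, hη2, hη⟩ : ∃ η : ℝ, 0 < η ∧ η ≤ ε / (8 * d) ∧ η ≤ 1 - ε ∧
      1024 * d ^ 4 * η ≤ κ * c * ε := by
    refine ⟨min (min (ε / (8 * d)) (1 - ε)) (κ * c * ε / (1024 * d ^ 4)),
      lt_min (lt_min (by positivity) (by linarith)) (by positivity),
      (min_le_left _ _).trans (min_le_left _ _), (min_le_left _ _).trans (min_le_right _ _), ?_⟩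
    have := mul_le_mul_of_nonneg_left (min_le_right (min (ε / (8 * d)) (1 - ε))
      (κ * c * ε / (1024 * d ^ 4))) (by positivity : (0 : ℝ) ≤ 1024 * d ^ 4)
    refine this.trans (le_of_eq ?_)
    field_simp
  set C := (d : ℝ) / 2 * ((d : ℝ) / 2 + 1) * (η ^ 2) ^ (-((d : ℝ) / 2) - 2) with hC
  have hC0 : 0 ≤ C := by positivity
  obtain ⟨R1, hR1⟩ := pow_near d (Real.sqrt d) 1 one_pos
  obtain ⟨R2, hR2⟩ := pow_near d ((1 + Real.sqrt d) / η) τ hτ0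
  set K := 3 * κ + 32 * (d : ℝ) ^ 2 + 432 * d * C with hK
  refine ⟨max (max R1 R2) (max (max 1 (2 / η)) (2 * K / (κ * c) + 1)), ?_⟩
  intro R hR n hn A H hA hH
  simp only [max_le_iff] at hR
  obtain ⟨⟨hRa, hRb⟩, ⟨hRc, hRd⟩, hRe⟩ := hR
  have hR0 : 0 < R := by linarith
  by_contra hcon
  push Not at hcon
  have hRη : 2 ≤ η * R := by
    rw [div_le_iff₀ hη0] at hRd; linarith
  have hRK : 2 * K < κ * c * R := by
    have : 2 * K / (κ * c) < R := by linarith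
    rw [div_lt_iff₀ (by positivity)] at this; linarith
  have hnpos : (0 : ℝ) < n := by rw [← hn]; positivity
  have hηR : η * R ≤ ε * R / (8 * d) := by
    have := mul_le_mul_of_nonneg_right hη1 hR0.le
    refine this.trans (le_of_eq ?_); ring
  have hℓe : ε * R / (4 * d) = 2 * (ε * R / (8 * d)) := by field_simp; norm_num
  have hℓ : η * R + 1 ≤ ε * R / (4 * d) := by rw [hℓe]; linarith
  have hℓ2 : d * (η * R + 1 + ε * R / (4 * d)) ^ 2 < (ε * R) ^ 2 := by
    have h1 : η * R + 1 + ε * R / (4 * d) ≤ ε * R / (2 * d) := by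
      have : ε * R / (2 * d) = 4 * (ε * R / (8 * d)) := by field_simp; norm_num
      rw [this, hℓe]; linarith
    have h2 : (η * R + 1 + ε * R / (4 * d)) ^ 2 ≤ (ε * R / (2 * d)) ^ 2 :=
      pow_le_pow_left₀ (by positivity) h1 2
    have h3 := mul_le_mul_of_nonneg_left h2 (by positivity : (0 : ℝ) ≤ d)
    have h4 : d * (ε * R / (2 * d)) ^ 2 = (ε * R) ^ 2 / (4 * d) := by field_simp; norm_num
    have h5 : (ε * R) ^ 2 / (4 * d) < (ε * R) ^ 2 := by
      rw [div_lt_iff₀ (by positivity)]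
      have : 0 < (ε * R) ^ 2 := by positivity
      nlinarith
    linarith
  have hηε : η ^ 2 ≤ 1 - ε := by nlinarith
  set D := (nsq_finite d R).toFinset with hDdef
  have hD : ∀ x, x ∈ D ↔ nsq x < R ^ 2 := fun x => by simp [hDdef]
  set I := (nsq_finite d (η * R + 1)).toFinset with hIdef
  have hI : ∀ x, x ∈ I ↔ nsq x < (η * R + 1) ^ 2 := fun x => by simp [hIdef]
  obtain ⟨f0, S, hf0, hf1, hS0, hS1, h1, h2⟩ := core_ineq hd n D A H I R η ε (ε * R / (4 * d))
    hRc hη0 hε hε1 hηε hD hI hA hH hℓ hℓ2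
  have hDc : (D.card : ℝ) ≤ 2 * n := by
    have h3 := count_le R hR0.le D (fun x hx => ((hD x).1 hx).le)
    have e : R + Real.sqrt d = R * (1 + Real.sqrt d / R) := by field_simp
    rw [e, mul_pow, ← mul_assoc, hn] at h3
    have := mul_le_mul_of_nonneg_left (hR1 R hRa) hnpos.le
    linarith
  have hQ : (η ^ d)⁻¹ * (I.card : ℝ) ≤ (1 + τ) * n := by
    have h3 := count_le (η * R + 1) (by positivity) I (fun x hx => ((hI x).1 hx).le)
    have e : η * R + 1 + Real.sqrt d = η * (R * (1 + (1 + Real.sqrt d) / η / R)) := by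
      field_simp; ring
    rw [e, mul_pow, mul_pow] at h3
    have e2 : ballVol d * (η ^ d * (R ^ d * (1 + (1 + Real.sqrt d) / η / R) ^ d)) =
        η ^ d * (n * (1 + (1 + Real.sqrt d) / η / R) ^ d) := by rw [← hn]; ring
    rw [e2] at h3
    rw [inv_mul_le_iff₀ (by positivity)]
    refine h3.trans (mul_le_mul_of_nonneg_left ?_ (by positivity))
    have := mul_le_mul_of_nonneg_left (hR2 R hRb) hnpos.le
    linarith
  rw [← hC, ← mul_assoc ((η ^ d)⁻¹)] at h2
  exact final_arith d n κ c τ η ε C R f0 S K H.card D.card ((η ^ d)⁻¹ * I.card) hd1 hnpos hκ hc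
    hτ0 hτ1 hτ hη0 hε hη hC0 hRc hK hRK hRη hf0 hf1 hS0 hS1 hDc (by positivity) hQ h1 hcon h2

lemma symm_bound {d : ℕ} (A H : Finset (Site d)) (R ε : ℝ) (hR : 0 < R) (hε : 0 < ε)
    (hs : Real.sqrt d ≤ (1 - ε) * R) (hA : ballVol d * R ^ d = A.card)
    (hH : ∀ x, x ∈ H ↔ x ∉ A ∧ (ε * R) ^ 2 ≤ nsq x ∧ nsq x ≤ ((1 - ε) * R) ^ 2) :
    (volume (box d (A : Set (Site d)) ∆ Metric.closedBall 0 R)).toReal ≤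
      2 * (H.card + ballVol d * (ε * R + Real.sqrt d) ^ d +
        (ballVol d * R ^ d - ballVol d * ((1 - ε) * R - Real.sqrt d) ^ d)) := by
  have hm := missing_vol A H R ε hR hε hs hH
  set B := Metric.closedBall (0 : EuclideanSpace ℝ (Fin d)) R with hB
  set X := box d (A : Set (Site d)) with hX
  set q := H.card + ballVol d * (ε * R + Real.sqrt d) ^ d +
        (ballVol d * R ^ d - ballVol d * ((1 - ε) * R - Real.sqrt d) ^ d) with hq
  have hω := ballVol_pos d
  have hq0 : 0 ≤ q := by
    have h1 : ballVol d * ((1 - ε) * R - Real.sqrt d) ^ d ≤ ballVol d * R ^ d :=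
      mul_le_mul_of_nonneg_left (pow_le_pow_left₀ (by linarith)
        (by nlinarith [Real.sqrt_nonneg (d : ℝ)]) d) hω.le
    have : 0 ≤ (H.card : ℝ) + ballVol d * (ε * R + Real.sqrt d) ^ d := by positivity
    rw [hq]; linarith
  have hvB : volume B = A.card := by
    rw [hB, vol_cball _ _ hR.le, hA, ENNReal.ofReal_natCast]
  have hXm : MeasurableSet X := box_meas A
  have hBm : MeasurableSet B := Metric.isClosed_closedBall.measurableSet
  have h1 : volume (X \ B) ≤ volume (B \ X) := by
    have e1 := measure_sdiff_add_inter (μ := volume) X hBm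
    have e2 := measure_sdiff_add_inter (μ := volume) B hXm
    rw [Set.inter_comm] at e2
    have h3 : volume (X \ B) + volume (X ∩ B) ≤ volume (B \ X) + volume (X ∩ B) := by
      rw [e1, e2, hvB]; exact vol_box_le A
    refine (ENNReal.add_le_add_iff_right ?_).1 h3
    refine ne_top_of_le_ne_top ?_ (measure_mono Set.inter_subset_right)
    rw [hvB]; exact ENNReal.natCast_ne_top _
  have h2 : volume (X ∆ B) ≤ ENNReal.ofReal (2 * q) := by
    rw [Set.symmDiff_def]
    refine (measure_union_le _ _).trans ?_
    rw [two_mul, ENNReal.ofReal_add hq0 hq0]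
    exact add_le_add (h1.trans hm) hm
  have := ENNReal.toReal_mono ENNReal.ofReal_ne_top h2
  rwa [ENNReal.toReal_ofReal (by linarith)] at this

lemma scale_vol {d : ℕ} (hd : 1 ≤ d) (n : ℕ) (hn : 1 ≤ n) (X : Set (EuclideanSpace ℝ (Fin d))) :
    (volume (((n : ℝ) ^ (-(1 : ℝ) / (d : ℝ)) • X) ∆ unitVolBall d)).toReal =
      (n : ℝ)⁻¹ * (volume (X ∆ Metric.closedBall 0 ((n / ballVol d) ^ ((1 : ℝ) / d)))).toReal := by
  have hω := ballVol_pos d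
  have hn0 : (0 : ℝ) < n := by exact_mod_cast hn
  have hd0 : (d : ℝ) ≠ 0 := by positivity
  set t := (n : ℝ) ^ (-(1 : ℝ) / (d : ℝ)) with ht
  have ht0 : 0 < t := by positivity
  have e1 : unitVolBall d = t • Metric.closedBall (0 : EuclideanSpace ℝ (Fin d))
      ((n / ballVol d) ^ ((1 : ℝ) / d)) := by
    rw [smul_closedBall _ _ (by positivity), smul_zero, Real.norm_of_nonneg ht0.le, unitVolBall]
    congr 1
    rw [Real.div_rpow hn0.le hω.le, ht, neg_div, Real.rpow_neg hn0.le, Real.rpow_neg hω.le]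
    have : (n : ℝ) ^ ((1 : ℝ) / d) ≠ 0 := by positivity
    field_simp
  rw [e1, ← Set.smul_set_symmDiff₀ ht0.ne', Measure.addHaar_smul, ENNReal.toReal_mul,
    finrank_euclideanSpace, Fintype.card_fin]
  congr 1
  rw [ENNReal.toReal_ofReal (abs_nonneg _), abs_of_pos (by positivity), ht, ← Real.rpow_natCast,
    ← Real.rpow_mul hn0.le, div_mul_cancel₀ _ hd0, Real.rpow_neg_one]


theorem rotor_router_shape_theorem (d : ℕ) (hd : 1 ≤ d)
    (r : Site d → ℕ → Dir d) (hr : HasDiscrepancy d 1 r) :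
    Tendsto (fun n : ℕ =>
        (volume (((n : ℝ) ^ (-(1 : ℝ) / (d : ℝ)) • box d (aggRegion r n)) ∆ unitVolBall d)).toReal)
      atTop (nhds 0) := by
  have hω := ballVol_pos d
  have hd1 : (1 : ℝ) ≤ d := by exact_mod_cast hd
  have hd0 : (d : ℝ) ≠ 0 := by positivity
  rw [Metric.tendsto_atTop]
  intro δ hδ
  obtain ⟨ε, hε, hε4, hεδ⟩ : ∃ ε : ℝ, 0 < ε ∧ ε ≤ 1 / 4 ∧ 16 * (1 + d) * ε ≤ δ := by
    refine ⟨min (1 / 4) (δ / (16 * (1 + d))), lt_min (by norm_num) (by positivity),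
      min_le_left _ _, ?_⟩
    have := mul_le_mul_of_nonneg_left (min_le_right (1 / 4) (δ / (16 * (1 + (d : ℝ)))))
      (by positivity : (0 : ℝ) ≤ 16 * (1 + d))
    refine this.trans (le_of_eq ?_)
    field_simp
  obtain ⟨R0, hcore⟩ := core hd ε (δ / 8) hε (by linarith) (by positivity)
  have htend : Tendsto (fun n : ℕ => ((n : ℝ) / ballVol d) ^ ((1 : ℝ) / d)) atTop atTop :=
    (tendsto_rpow_atTop (by positivity)).comp
      (tendsto_natCast_atTop_atTop.atTop_div_const hω)
  obtain ⟨N, hN⟩ := eventually_atTop.1 ((htend.eventually_ge_atTop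
    (max R0 (Real.sqrt d / ε + 1))).and (eventually_ge_atTop 1))
  refine ⟨N, fun n hn => ?_⟩
  obtain ⟨hRn, hn1⟩ := hN n hn
  rw [scale_vol hd n hn1]
  set R := ((n : ℝ) / ballVol d) ^ ((1 : ℝ) / d) with hR
  have hn0 : (0 : ℝ) < n := by exact_mod_cast hn1
  have hRd : ballVol d * R ^ d = n := by
    rw [hR, ← Real.rpow_natCast, ← Real.rpow_mul (by positivity), one_div,
      inv_mul_cancel₀ hd0, Real.rpow_one]
    field_simp
  obtain ⟨A, hAset, hAcard, hAf⟩ := agg_main hd r hr n hn1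
  have hs0 : 0 ≤ Real.sqrt d := Real.sqrt_nonneg _
  have hRs : Real.sqrt d / ε + 1 ≤ R := (le_max_right _ _).trans hRn
  have hRpos : 0 < R := by have : 0 ≤ Real.sqrt d / ε := by positivity
                           linarith
  have hsε : Real.sqrt d ≤ ε * R := by
    have : Real.sqrt d / ε ≤ R := by linarith
    rw [div_le_iff₀ hε] at this; linarith
  have hHfin : {x : Site d | x ∉ A ∧ (ε * R) ^ 2 ≤ nsq x ∧ nsq x ≤ ((1 - ε) * R) ^ 2}.Finite := by
    refine (nsq_finite d R).subset (fun x hx => ?_)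
    have h2 : ((1 - ε) * R) ^ 2 < R ^ 2 :=
      pow_lt_pow_left₀ (by nlinarith) (mul_nonneg (by linarith) hRpos.le) (by norm_num)
    exact lt_of_le_of_lt hx.2.2 h2
  set H := hHfin.toFinset with hHdef
  have hH : ∀ x, x ∈ H ↔ x ∉ A ∧ (ε * R) ^ 2 ≤ nsq x ∧ nsq x ≤ ((1 - ε) * R) ^ 2 :=
    fun x => by simp [hHdef]
  have hHc := hcore R ((le_max_left _ _).trans hRn) n hRd A H hAf hH
  have hsb := symm_bound A H R ε hRpos hε (by nlinarith) (by rw [hRd, hAcard]) hH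
  rw [hAset, hRd] at hsb
  have c1 : ballVol d * (ε * R + Real.sqrt d) ^ d ≤ 2 * ε * n := by
    have h1 : (ε * R + Real.sqrt d) ^ d ≤ (2 * ε * R) ^ d :=
      pow_le_pow_left₀ (by positivity) (by linarith) d
    have h2 : (2 * ε) ^ d ≤ 2 * ε := by
      have := pow_le_pow_of_le_one (by positivity : 0 ≤ 2 * ε) (by linarith) hd
      rwa [pow_one] at this
    calc ballVol d * (ε * R + Real.sqrt d) ^ d ≤ ballVol d * (2 * ε * R) ^ d :=
          mul_le_mul_of_nonneg_left h1 hω.le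
      _ = (2 * ε) ^ d * n := by rw [← hRd]; ring
      _ ≤ 2 * ε * n := mul_le_mul_of_nonneg_right h2 hn0.le
  have c2 : n - 2 * d * ε * n ≤ ballVol d * ((1 - ε) * R - Real.sqrt d) ^ d := by
    have h1 : ((1 - 2 * ε) * R) ^ d ≤ ((1 - ε) * R - Real.sqrt d) ^ d :=
      pow_le_pow_left₀ (mul_nonneg (by linarith) hRpos.le) (by linarith) d
    have h2 := one_add_mul_le_pow (by linarith : (-2 : ℝ) ≤ -(2 * ε)) d
    calc n - 2 * d * ε * n = (1 + d * (-(2 * ε))) * n := by ring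
      _ ≤ (1 + -(2 * ε)) ^ d * n := mul_le_mul_of_nonneg_right h2 hn0.le
      _ = ballVol d * ((1 - 2 * ε) * R) ^ d := by
          rw [mul_pow, ← hRd, ← sub_eq_add_neg]; ring
      _ ≤ _ := mul_le_mul_of_nonneg_left h1 hω.le
  rw [Real.dist_eq, sub_zero, abs_of_nonneg (by positivity), inv_mul_lt_iff₀ hn0]
  have c3 := mul_le_mul_of_nonneg_right hεδ hn0.le
  nlinarith [mul_pos hδ hn0]

end RotorRouterPaper
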